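/- arXiv:1604.00753 — 2 statements merged into one kernel-verified Lean document; each statement's English description precedes it below -/
import Mathlib

section
/- ∫₀¹ log Γ(x)·log(sin(πx)) dx = −(1/2)·log 2·log(2π) − π²/24. -/
open Real

open Set Filter Topology MeasureTheory intervalIntegral

/-- Domination on the open unit interval suffices for interval integrability on `0..1`. -/
lemma intervalIntegrable_zero_one_of_le {f g : ℝ → ℝ} (hg : IntervalIntegrable g volume 0 1)
    (hf : Measurable f) (h : ∀ x ∈ Ioo (0 : ℝ) 1, |f x| ≤ g x) :
    IntervalIntegrable f volume 0 1 := by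
  rw [intervalIntegrable_iff_integrableOn_Ioo_of_le zero_le_one] at hg ⊢
  exact Integrable.mono' hg hf.aestronglyMeasurable
    ((ae_restrict_mem measurableSet_Ioo).mono h)

lemma intervalIntegrable_log_sq_zero_one :
    IntervalIntegrable (fun x : ℝ => Real.log x ^ 2) volume 0 1 := by
  refine intervalIntegrable_zero_one_of_le
    (g := fun x : ℝ => 16 * x ^ (-(1 / 2) : ℝ))
    ((intervalIntegrable_rpow' (by norm_num)).const_mul _) (by fun_prop) ?_
  rintro x ⟨h0, h1⟩
  have h := Real.abs_log_mul_self_rpow_lt x (1 / 4) h0 h1.le (by norm_num)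
  rw [one_div_one_div] at h
  have h2 : (Real.log x * x ^ (1 / 4 : ℝ)) ^ 2 ≤ 16 := by
    rw [← sq_abs]
    have := abs_nonneg (Real.log x * x ^ (1 / 4 : ℝ))
    nlinarith
  have h3 : (x ^ (1 / 4 : ℝ)) ^ 2 = x ^ (1 / 2 : ℝ) := by
    rw [← Real.rpow_natCast, ← Real.rpow_mul h0.le]
    norm_num
  rw [mul_pow, h3] at h2
  rw [abs_of_nonneg (sq_nonneg _), Real.rpow_neg h0.le, ← div_eq_mul_inv,
    le_div_iff₀ (by positivity)]
  exact h2

lemma sin_pi_mul_pos {x : ℝ} (hx : x ∈ Ioo (0 : ℝ) 1) : 0 < Real.sin (π * x) :=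
  Real.sin_pos_of_pos_of_lt_pi (mul_pos pi_pos hx.1) (by nlinarith [hx.2, pi_pos])

lemma sin_pi_mul_one_sub (x : ℝ) : Real.sin (π * (1 - x)) = Real.sin (π * x) := by
  rw [mul_sub, mul_one, Real.sin_pi_sub]

lemma mul_one_sub_le_sin_pi_mul {x : ℝ} (hx : x ∈ Ioo (0 : ℝ) 1) :
    x * (1 - x) ≤ Real.sin (π * x) := by
  have key : ∀ y : ℝ, 0 < y → y ≤ 1 / 2 → y * (1 - y) ≤ Real.sin (π * y) := by
    intro y h0 h1
    have h := Real.mul_le_sin (x := π * y) (by positivity) (by nlinarith [pi_pos])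
    have h' : 2 / π * (π * y) = 2 * y := by field_simp
    nlinarith
  rcases le_total x (1 / 2) with h | h
  · exact key x hx.1 h
  · have := key (1 - x) (by linarith [hx.2]) (by linarith)
    rw [sin_pi_mul_one_sub] at this
    linarith

lemma intervalIntegrable_log_sin_pi_mul_sq :
    IntervalIntegrable (fun x : ℝ => Real.log (Real.sin (π * x)) ^ 2) volume 0 1 := by
  have hr : IntervalIntegrable (fun x : ℝ => Real.log (1 - x) ^ 2) volume 0 1 := by
    simpa using (intervalIntegrable_log_sq_zero_one.comp_sub_left 1).symm
  refine intervalIntegrable_zero_one_of_le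
    ((intervalIntegrable_log_sq_zero_one.add hr).const_mul 2) (by fun_prop) ?_
  intro x hx
  have h0 : 0 < 1 - x := by linarith [hx.2]
  have h1 := Real.log_le_log (mul_pos hx.1 h0) (mul_one_sub_le_sin_pi_mul hx)
  rw [Real.log_mul hx.1.ne' h0.ne'] at h1
  have h2 := Real.log_nonpos (sin_pi_mul_pos hx).le (Real.sin_le_one _)
  rw [abs_of_nonneg (sq_nonneg _)]
  nlinarith [sq_nonneg (Real.log x - Real.log (1 - x))]

lemma intervalIntegrable_log_sin_pi_mul :
    IntervalIntegrable (fun x : ℝ => Real.log (Real.sin (π * x))) volume 0 1 := by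
  refine intervalIntegrable_zero_one_of_le
    (intervalIntegrable_log_sin_pi_mul_sq.add (intervalIntegrable_const (c := (1 : ℝ))))
    (by fun_prop) ?_
  intro x _
  rw [abs_le]
  constructor <;> nlinarith [sq_nonneg (Real.log (Real.sin (π * x)) - 1),
    sq_nonneg (Real.log (Real.sin (π * x)) + 1)]

lemma integral_log_sin_pi_mul :
    ∫ x in (0 : ℝ)..1, Real.log (Real.sin (π * x)) = -Real.log 2 := by
  rw [integral_comp_mul_left (fun y => Real.log (Real.sin y)) pi_ne_zero]
  simp only [mul_zero, mul_one, integral_log_sin_zero_pi, smul_eq_mul]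
  field_simp

lemma intervalIntegrable_log_Gamma_mul_log_sin :
    IntervalIntegrable (fun x : ℝ => Real.log (Real.Gamma x) * Real.log (Real.sin (π * x)))
      volume 0 1 := by
  have h1 : IntervalIntegrable
      (fun x : ℝ => Real.log (Real.sin (π * x)) * Real.log (Real.Gamma (x + 1))) volume 0 1 := by
    refine intervalIntegrable_log_sin_pi_mul.mul_continuousOn ?_
    rw [uIcc_of_le zero_le_one]
    intro x hx
    have hd : DifferentiableAt ℝ Real.Gamma (x + 1) :=
      Real.differentiableAt_Gamma fun m => by
        have : (0 : ℝ) ≤ m := m.cast_nonneg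
        linarith [hx.1]
    have hc : ContinuousAt (fun x : ℝ => Real.Gamma (x + 1)) x :=
      ContinuousAt.comp (f := fun x : ℝ => x + 1) hd.continuousAt (by fun_prop)
    exact (hc.log (Real.Gamma_pos_of_pos (by linarith [hx.1])).ne').continuousWithinAt
  have h2 : IntervalIntegrable
      (fun x : ℝ => Real.log x * Real.log (Real.sin (π * x))) volume 0 1 := by
    refine intervalIntegrable_zero_one_of_le
      (intervalIntegrable_log_sq_zero_one.add intervalIntegrable_log_sin_pi_mul_sq)
      (by fun_prop) ?_
    intro x _
    rw [abs_le]
    constructor <;> nlinarith [sq_nonneg (Real.log x - Real.log (Real.sin (π * x))),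
      sq_nonneg (Real.log x + Real.log (Real.sin (π * x)))]
  refine (h1.sub h2).congr_uIoo ?_
  intro x hx
  rw [uIoo_of_le zero_le_one] at hx
  simp only [Real.Gamma_add_one hx.1.ne',
    Real.log_mul hx.1.ne' (Real.Gamma_pos_of_pos hx.1).ne']
  ring

/-- The mean value property for the real part of `log (1 - z) ^ 2` on circles inside the
unit disc. -/
lemma integral_re_log_one_sub_sq {r : ℝ} (h0 : 0 ≤ r) (h1 : r < 1) :
    ∫ x in (0 : ℝ)..1, (Complex.log (1 - circleMap 0 r (2 * π * x)) ^ 2).re = 0 := by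
  rw [integral_comp_mul_left (fun y => (Complex.log (1 - circleMap 0 r y) ^ 2).re)
    two_pi_pos.ne']
  have h := InnerProductSpace.HarmonicOnNhd.circleAverage_eq (c := 0) (R := r)
    (f := fun z : ℂ => (Complex.log (1 - z) ^ 2).re) fun z hz => by
      refine AnalyticAt.harmonicAt_re (f := fun z : ℂ => Complex.log (1 - z) ^ 2) ?_
      have hz' : ‖z‖ < 1 := by
        rw [mem_closedBall_zero_iff, abs_of_nonneg h0] at hz
        linarith
      refine ((analyticAt_const.sub analyticAt_id).clog ?_).pow 2
      left
      have := (Complex.re_le_norm z).trans_lt hz'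
      simpa using this
  simpa [Real.circleAverage_def] using h

lemma cos_two_pi_mul_eq (x : ℝ) :
    Real.cos (2 * π * x) = 1 - 2 * Real.sin (π * x) ^ 2 := by
  rw [mul_assoc, Real.cos_two_mul, Real.cos_sq']
  ring

lemma norm_sq_one_sub_circleMap (r x : ℝ) :
    ‖1 - circleMap 0 r (2 * π * x)‖ ^ 2 = (1 - r) ^ 2 + 4 * r * Real.sin (π * x) ^ 2 := by
  have hc := cos_two_pi_mul_eq x
  have hs := Real.sin_sq_add_cos_sq (2 * π * x)
  rw [← Complex.normSq_eq_norm_sq, Complex.normSq_apply]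
  simp only [circleMap_zero, Complex.sub_re, Complex.sub_im, Complex.one_re, Complex.one_im,
    Complex.re_ofReal_mul, Complex.im_ofReal_mul, Complex.exp_ofReal_mul_I_re,
    Complex.exp_ofReal_mul_I_im]
  linear_combination r ^ 2 * hs - 2 * r * hc

lemma abs_re_log_one_sub_sq_le {r x : ℝ} (hr : 1 / 4 ≤ r) (hr1 : r < 1)
    (hx : x ∈ Ioo (0 : ℝ) 1) :
    |(Complex.log (1 - circleMap 0 r (2 * π * x)) ^ 2).re| ≤
      Real.log (Real.sin (π * x)) ^ 2 + (1 + π ^ 2) := by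
  have hs := sin_pi_mul_pos hx
  have hs1 := Real.sin_le_one (π * x)
  set w := 1 - circleMap 0 r (2 * π * x)
  have hn : ‖w‖ ^ 2 = _ := norm_sq_one_sub_circleMap r x
  have hlow : Real.sin (π * x) ≤ ‖w‖ := by
    refine le_of_sq_le_sq ?_ (norm_nonneg _)
    rw [hn]
    nlinarith [sq_nonneg (1 - r), sq_nonneg (Real.sin (π * x))]
  have hup : ‖w‖ ≤ 2 := by
    refine le_of_sq_le_sq ?_ zero_le_two
    rw [hn]
    nlinarith [mul_nonneg (show 0 ≤ r by linarith)
      (show 0 ≤ 1 - Real.sin (π * x) ^ 2 by nlinarith)]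
  have hlog1 := Real.log_le_log hs hlow
  have hlog2 : Real.log ‖w‖ ≤ 1 := by
    have := Real.log_le_sub_one_of_pos (hs.trans_le hlow)
    linarith
  have hlog0 := Real.log_nonpos hs.le hs1
  have harg : Complex.arg w ^ 2 ≤ π ^ 2 := sq_le_sq' (Complex.neg_pi_lt_arg w).le
    (Complex.arg_le_pi w)
  have hsq : Real.log ‖w‖ ^ 2 ≤ Real.log (Real.sin (π * x)) ^ 2 + 1 := by
    rcases le_total 0 (Real.log ‖w‖) with h | h <;> nlinarith
  rw [sq, Complex.mul_re, Complex.log_re, Complex.log_im, abs_le]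
  constructor <;> nlinarith [sq_nonneg (Real.log ‖w‖), sq_nonneg (Complex.arg w)]

lemma one_sub_circleMap_one (x : ℝ) :
    1 - circleMap 0 1 (2 * π * x) = ((2 * Real.sin (π * x) : ℝ) : ℂ) *
      (Complex.cos ((π * x - π / 2 : ℝ) : ℂ) +
        Complex.sin ((π * x - π / 2 : ℝ) : ℂ) * Complex.I) := by
  have hc := cos_two_pi_mul_eq x
  have hs : Real.sin (2 * π * x) = 2 * Real.sin (π * x) * Real.cos (π * x) := by
    rw [mul_assoc, Real.sin_two_mul]
  rw [← Complex.ofReal_cos, ← Complex.ofReal_sin, Real.cos_sub_pi_div_two,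
    Real.sin_sub_pi_div_two]
  apply Complex.ext
  · simp only [circleMap_zero, Complex.sub_re, Complex.one_re, Complex.re_ofReal_mul,
      Complex.exp_ofReal_mul_I_re, Complex.add_re, Complex.ofReal_re, Complex.I_re, mul_zero, hc]
    ring
  · simp only [circleMap_zero, Complex.sub_im, Complex.one_im, Complex.im_ofReal_mul,
      Complex.exp_ofReal_mul_I_im, Complex.add_im, Complex.ofReal_im, Complex.I_im, mul_one, hs]
    ring

lemma re_log_one_sub_circleMap_one_sq {x : ℝ} (hx : x ∈ Ioo (0 : ℝ) 1) :
    (Complex.log (1 - circleMap 0 1 (2 * π * x)) ^ 2).re =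
      (Real.log 2 + Real.log (Real.sin (π * x))) ^ 2 - (π * x - π / 2) ^ 2 := by
  have hs := sin_pi_mul_pos hx
  have h2s : 0 < 2 * Real.sin (π * x) := by positivity
  have harg : Complex.arg (1 - circleMap 0 1 (2 * π * x)) = π * x - π / 2 := by
    rw [one_sub_circleMap_one]
    exact Complex.arg_mul_cos_add_sin_mul_I h2s
      ⟨by nlinarith [pi_pos, hx.1], by nlinarith [pi_pos, hx.2]⟩
  have hnorm : ‖1 - circleMap 0 1 (2 * π * x)‖ = 2 * Real.sin (π * x) := by
    rw [← sq_eq_sq₀ (norm_nonneg _) h2s.le, norm_sq_one_sub_circleMap]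
    ring
  rw [sq, Complex.mul_re, Complex.log_re, Complex.log_im, harg, hnorm,
    Real.log_mul two_ne_zero hs.ne']
  ring

lemma integral_log_two_mul_sin_sq_sub :
    ∫ x in (0 : ℝ)..1,
      ((Real.log 2 + Real.log (Real.sin (π * x))) ^ 2 - (π * x - π / 2) ^ 2) = 0 := by
  have hne : ∀ᵐ x : ℝ, x ≠ 1 := by simp [ae_iff]
  have hIoo : ∀ {x : ℝ}, x ≠ 1 → x ∈ uIoc (0 : ℝ) 1 → x ∈ Ioo (0 : ℝ) 1 := by
    intro x h1 hx
    rw [uIoc_of_le zero_le_one] at hx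
    exact ⟨hx.1, lt_of_le_of_ne hx.2 h1⟩
  have hev : ∀ᶠ r : ℝ in 𝓝[<] 1, 1 / 4 ≤ r ∧ r < 1 := by
    filter_upwards [Ioo_mem_nhdsLT (show (1 / 4 : ℝ) < 1 by norm_num)] with r hr
    exact ⟨hr.1.le, hr.2⟩
  have hlim := tendsto_integral_filter_of_dominated_convergence (μ := volume) (a := 0) (b := 1)
    (l := 𝓝[<] (1 : ℝ))
    (F := fun r x => (Complex.log (1 - circleMap 0 r (2 * π * x)) ^ 2).re)
    (f := fun x => (Real.log 2 + Real.log (Real.sin (π * x))) ^ 2 - (π * x - π / 2) ^ 2)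
    (fun x => Real.log (Real.sin (π * x)) ^ 2 + (1 + π ^ 2))
    (Eventually.of_forall fun r => by
      have : Measurable fun x : ℝ => (Complex.log (1 - circleMap 0 r (2 * π * x)) ^ 2).re := by
        unfold circleMap
        fun_prop
      exact this.aestronglyMeasurable)
    (by
      filter_upwards [hev] with r hr
      filter_upwards [hne] with x h1 hx
      exact abs_re_log_one_sub_sq_le hr.1 hr.2 (hIoo h1 hx))
    (intervalIntegrable_log_sin_pi_mul_sq.add intervalIntegrable_const)
    (by
      filter_upwards [hne] with x h1 hx
      have hx' := hIoo h1 hx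
      rw [← re_log_one_sub_circleMap_one_sq hx']
      have hslit : 1 - circleMap 0 1 (2 * π * x) ∈ Complex.slitPlane := by
        left
        rw [one_sub_circleMap_one, ← Complex.ofReal_cos, ← Complex.ofReal_sin,
          Real.cos_sub_pi_div_two]
        have := sin_pi_mul_pos hx'
        simp only [Complex.add_re, Complex.ofReal_re, Complex.ofReal_im,
          Complex.I_re, Complex.mul_re, mul_zero, zero_mul, sub_zero, add_zero]
        positivity
      have hc : ContinuousAt (fun r : ℝ => 1 - circleMap 0 r (2 * π * x)) 1 := by
        unfold circleMap
        fun_prop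
      exact (Complex.continuous_re.continuousAt.comp ((hc.clog hslit).pow 2)).tendsto.mono_left
        nhdsWithin_le_nhds)
  refine tendsto_nhds_unique hlim (tendsto_const_nhds.congr' ?_)
  filter_upwards [hev] with r hr
  exact (integral_re_log_one_sub_sq (by linarith [hr.1]) hr.2).symm

lemma integral_pi_mul_sub_sq :
    ∫ x in (0 : ℝ)..1, (π * x - π / 2) ^ 2 = π ^ 2 / 12 := by
  have h : ∀ x ∈ uIcc (0 : ℝ) 1, HasDerivAt
      (fun x : ℝ => π ^ 2 * (x - 1 / 2) ^ 3 / 3) ((π * x - π / 2) ^ 2) x := by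
    intro x _
    refine ((((hasDerivAt_id x).sub_const (1 / 2)).pow 3).const_mul (π ^ 2)
      |>.div_const 3).congr_deriv ?_
    simp only [id]
    ring
  rw [integral_eq_sub_of_hasDerivAt h ((by fun_prop : Continuous _).intervalIntegrable _ _)]
  ring

lemma integral_log_sin_pi_mul_sq :
    ∫ x in (0 : ℝ)..1, Real.log (Real.sin (π * x)) ^ 2 = Real.log 2 ^ 2 + π ^ 2 / 12 := by
  have h := integral_log_two_mul_sin_sq_sub
  have hexp : ∀ x : ℝ,
      (Real.log 2 + Real.log (Real.sin (π * x))) ^ 2 - (π * x - π / 2) ^ 2 =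
      Real.log (Real.sin (π * x)) ^ 2 + 2 * Real.log 2 * Real.log (Real.sin (π * x)) +
        (Real.log 2 ^ 2 - (π * x - π / 2) ^ 2) := fun x => by ring
  have hq : IntervalIntegrable (fun x : ℝ => (π * x - π / 2) ^ 2) volume 0 1 :=
    (by fun_prop : Continuous _).intervalIntegrable _ _
  have hL := intervalIntegrable_log_sin_pi_mul.const_mul (2 * Real.log 2)
  have hc : IntervalIntegrable (fun _ : ℝ => Real.log 2 ^ 2) volume 0 1 :=
    intervalIntegrable_const
  simp only [hexp] at h
  rw [integral_add (intervalIntegrable_log_sin_pi_mul_sq.add hL) (hc.sub hq),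
    integral_add intervalIntegrable_log_sin_pi_mul_sq hL, integral_sub hc hq,
    intervalIntegral.integral_const_mul, integral_log_sin_pi_mul, integral_pi_mul_sub_sq,
    intervalIntegral.integral_const, smul_eq_mul] at h
  linarith

lemma log_Gamma_add_log_Gamma_one_sub {x : ℝ} (hx : x ∈ Ioo (0 : ℝ) 1) :
    Real.log (Real.Gamma x) + Real.log (Real.Gamma (1 - x)) =
      Real.log π - Real.log (Real.sin (π * x)) := by
  rw [← Real.log_mul (Real.Gamma_pos_of_pos hx.1).ne'
    (Real.Gamma_pos_of_pos (by linarith [hx.2])).ne', Real.Gamma_mul_Gamma_one_sub,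
    Real.log_div pi_ne_zero (sin_pi_mul_pos hx).ne']

/-- `∫₀¹ log Γ(x)·log(sin(πx)) dx = −(1/2)·log 2·log(2π) − π²/24`. -/
theorem integral_log_Gamma_mul_log_sin :
    ∫ x in (0:ℝ)..1, Real.log (Real.Gamma x) * Real.log (Real.sin (π * x)) =
      -(1 / 2) * Real.log 2 * Real.log (2 * π) - π ^ 2 / 24 := by
  set f : ℝ → ℝ := fun x => Real.log (Real.Gamma x) * Real.log (Real.sin (π * x)) with hf
  have hi : IntervalIntegrable f volume 0 1 := intervalIntegrable_log_Gamma_mul_log_sin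
  have hi' : IntervalIntegrable (fun x => f (1 - x)) volume 0 1 := by
    simpa using (hi.comp_sub_left 1).symm
  have hrefl : ∫ x in (0 : ℝ)..1, f (1 - x) = ∫ x in (0 : ℝ)..1, f x := by
    simp
  have hsum : ∫ x in (0 : ℝ)..1, (f x + f (1 - x)) =
      ∫ x in (0 : ℝ)..1, (Real.log π * Real.log (Real.sin (π * x)) -
        Real.log (Real.sin (π * x)) ^ 2) := by
    refine integral_congr_uIoo fun x hx => ?_
    rw [uIoo_of_le zero_le_one] at hx
    simp only [hf, sin_pi_mul_one_sub]
    linear_combination Real.log (Real.sin (π * x)) * log_Gamma_add_log_Gamma_one_sub hx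
  rw [integral_add hi hi', hrefl,
    integral_sub (intervalIntegrable_log_sin_pi_mul.const_mul _)
      intervalIntegrable_log_sin_pi_mul_sq,
    intervalIntegral.integral_const_mul, integral_log_sin_pi_mul,
    integral_log_sin_pi_mul_sq] at hsum
  rw [Real.log_mul two_ne_zero pi_ne_zero]
  linarith
end

section
/- The series ∑_{n=2}^∞ (H_n·log n)/n² converges and equals (π²/6)·(π²/8 − γ²/2 + log²(2π)) + π²·γ·log(A²/(2π)^{1/6}) − C·ζ(3) − ζ′(3) + (1/2)·ζ″(2) − 2π²·∫₀¹ x·log²Γ(x) dx, where H_n is the n-th harmonic number, A = e^{1/12 − ζ′(−1)} is the Glaisher–Kinkelin constant, C = log(2π) + γ, and ζ″(2) is the second derivative of the Riemann zeta function at 2. -/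
open Real

section

open MeasureTheory intervalIntegral Set Filter Topology

/-- The `n`-th cosine coefficient of a function on `[0, 1]`. -/
noncomputable def cosCoeff (f : ℝ → ℝ) (n : ℕ) : ℝ := ∫ x in (0 : ℝ)..1, f x * cos (2 * π * n * x)

/-- The `n`-th sine coefficient of a function on `[0, 1]`. -/
noncomputable def sinCoeff (f : ℝ → ℝ) (n : ℕ) : ℝ := ∫ x in (0 : ℝ)..1, f x * sin (2 * π * n * x)

/-- Square integrability on the unit interval. -/
abbrev SqIntegrable (f : ℝ → ℝ) : Prop := MemLp f 2 (volume.restrict (Ioc (0 : ℝ) 1))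

theorem SqIntegrable.intervalIntegrable {f : ℝ → ℝ} (hf : SqIntegrable f) :
    IntervalIntegrable f volume 0 1 := by
  rw [intervalIntegrable_iff_integrableOn_Ioc_of_le zero_le_one]
  exact hf.integrable (by norm_num)

theorem SqIntegrable.intervalIntegrable_mul {f g : ℝ → ℝ} (hf : SqIntegrable f)
    (hg : SqIntegrable g) : IntervalIntegrable (fun x => f x * g x) volume 0 1 := by
  rw [intervalIntegrable_iff_integrableOn_Ioc_of_le zero_le_one]
  exact MemLp.integrable_mul hf hg

theorem fourierCoeffOn_ofReal_eq {f : ℝ → ℝ} (hf : IntervalIntegrable f volume 0 1) (n : ℤ) :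
    fourierCoeffOn (zero_lt_one' ℝ) (fun x => (f x : ℂ)) n =
      ((∫ x in (0 : ℝ)..1, f x * cos (2 * π * n * x) : ℝ) : ℂ) -
        Complex.I * ((∫ x in (0 : ℝ)..1, f x * sin (2 * π * n * x) : ℝ) : ℂ) := by
  rw [fourierCoeffOn_eq_integral, ← intervalIntegral.integral_ofReal,
    ← intervalIntegral.integral_ofReal, ← intervalIntegral.integral_const_mul,
    ← intervalIntegral.integral_sub]
  · simp only [sub_zero, div_one, one_smul]
    refine intervalIntegral.integral_congr fun x _ => ?_
    have h : fourier (-n) (x : AddCircle ((1 : ℝ) - 0)) =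
        Complex.cos ((2 * π * n * x : ℝ) : ℂ) - Complex.sin ((2 * π * n * x : ℝ) : ℂ) * Complex.I := by
      rw [fourier_coe_apply]
      have : (2 * π * Complex.I * ((-n : ℤ) : ℂ) * x / ((1 - 0 : ℝ) : ℂ)) =
          ((-(2 * π * n * x) : ℝ) : ℂ) * Complex.I := by
        push_cast
        ring
      rw [this, Complex.exp_mul_I]
      push_cast
      rw [Complex.cos_neg, Complex.sin_neg]
      ring
    simp only [h, smul_eq_mul]
    push_cast
    ring
  · have h : IntervalIntegrable (fun x => f x * cos (2 * π * n * x)) volume 0 1 :=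
      hf.mul_continuousOn (by fun_prop)
    exact ⟨h.1.ofReal, h.2.ofReal⟩
  · have h : IntervalIntegrable (fun x => f x * sin (2 * π * n * x)) volume 0 1 :=
      hf.mul_continuousOn (by fun_prop)
    exact IntervalIntegrable.const_mul ⟨h.1.ofReal, h.2.ofReal⟩ _

theorem hasSum_sq_cosCoeff_add_sq_sinCoeff {f : ℝ → ℝ} (hf : SqIntegrable f) :
    HasSum (fun n : ℕ => 2 * (cosCoeff f (n + 1) ^ 2 + sinCoeff f (n + 1) ^ 2))
      ((∫ x in (0 : ℝ)..1, f x ^ 2) - (∫ x in (0 : ℝ)..1, f x) ^ 2) := by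
  have h := hasSum_sq_fourierCoeffOn (zero_lt_one' ℝ) (f := fun x => (f x : ℂ)) hf.ofReal
  have hnorm : ∀ n : ℤ, ‖fourierCoeffOn (zero_lt_one' ℝ) (fun x => (f x : ℂ)) n‖ ^ 2 =
      (∫ x in (0 : ℝ)..1, f x * cos (2 * π * n * x)) ^ 2 +
        (∫ x in (0 : ℝ)..1, f x * sin (2 * π * n * x)) ^ 2 := by
    intro n
    rw [fourierCoeffOn_ofReal_eq hf.intervalIntegrable, ← Complex.normSq_eq_norm_sq,
      Complex.normSq_apply]
    simp
    ring
  simp_rw [hnorm] at h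
  have h2 := (hasSum_nat_add_iff' 1).mpr h.nat_add_neg
  convert! h2 using 1
  · ext n
    simp only [cosCoeff, sinCoeff]
    push_cast
    simp only [mul_neg, neg_mul, cos_neg, sin_neg, intervalIntegral.integral_neg]
    ring
  · simp

/-- **Parseval's identity** for real functions on the unit interval. -/
theorem hasSum_cosCoeff_mul_add_sinCoeff_mul {f g : ℝ → ℝ} (hf : SqIntegrable f)
    (hg : SqIntegrable g) :
    HasSum (fun n : ℕ => 2 * (cosCoeff f (n + 1) * cosCoeff g (n + 1) +
        sinCoeff f (n + 1) * sinCoeff g (n + 1)))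
      ((∫ x in (0 : ℝ)..1, f x * g x) -
        (∫ x in (0 : ℝ)..1, f x) * ∫ x in (0 : ℝ)..1, g x) := by
  have hi := hf.intervalIntegrable
  have hj := hg.intervalIntegrable
  have h1 := hasSum_sq_cosCoeff_add_sq_sinCoeff (hf.add hg)
  have h2 := hasSum_sq_cosCoeff_add_sq_sinCoeff (hf.sub hg)
  have hsq : ∀ {u : ℝ → ℝ}, SqIntegrable u →
      IntervalIntegrable (fun x => u x ^ 2) volume 0 1 := fun hu => by
    simpa only [sq] using hu.intervalIntegrable_mul hu
  convert! (h1.sub h2).div_const 4 using 1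
  · ext n
    have hc : ∀ {u : ℝ → ℝ}, IntervalIntegrable u volume 0 1 → IntervalIntegrable
        (fun x => u x * cos (2 * π * ((n + 1 : ℕ) : ℝ) * x)) volume 0 1 :=
      fun hu => hu.mul_continuousOn (by fun_prop)
    have hs : ∀ {u : ℝ → ℝ}, IntervalIntegrable u volume 0 1 → IntervalIntegrable
        (fun x => u x * sin (2 * π * ((n + 1 : ℕ) : ℝ) * x)) volume 0 1 :=
      fun hu => hu.mul_continuousOn (by fun_prop)
    simp only [cosCoeff, sinCoeff, Pi.add_apply, Pi.sub_apply, add_mul, sub_mul]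
    rw [intervalIntegral.integral_add (hc hi) (hc hj), intervalIntegral.integral_add (hs hi) (hs hj),
      intervalIntegral.integral_sub (hc hi) (hc hj), intervalIntegral.integral_sub (hs hi) (hs hj)]
    ring
  · have h4 : (∫ x in (0 : ℝ)..1, f x * g x) = ((∫ x in (0 : ℝ)..1, (f + g) x ^ 2) -
        ∫ x in (0 : ℝ)..1, (f - g) x ^ 2) / 4 := by
      rw [← intervalIntegral.integral_sub (hsq (hf.add hg)) (hsq (hf.sub hg)),
        ← intervalIntegral.integral_div]
      refine intervalIntegral.integral_congr fun x _ => ?_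
      simp only [Pi.add_apply, Pi.sub_apply]
      ring
    rw [h4]
    simp only [Pi.add_apply, Pi.sub_apply]
    rw [intervalIntegral.integral_add hi hj, intervalIntegral.integral_sub hi hj]
    ring

theorem sin_two_pi_mul_int (k : ℤ) : sin (2 * π * k) = 0 := by
  rw [show 2 * π * k = ((2 * k : ℤ) : ℝ) * π by push_cast; ring, sin_int_mul_pi]

theorem cos_two_pi_mul_int (k : ℤ) : cos (2 * π * k) = 1 := by
  rw [show 2 * π * k = k * (2 * π) by ring, cos_int_mul_two_pi]

theorem integral_cos_two_pi_mul {k : ℤ} (hk : k ≠ 0) :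
    ∫ x in (0 : ℝ)..1, cos (2 * π * k * x) = 0 := by
  have hk' : 2 * π * (k : ℝ) ≠ 0 := by
    have : (k : ℝ) ≠ 0 := by exact_mod_cast hk
    positivity
  rw [intervalIntegral.integral_comp_mul_left (fun x => cos x) hk', integral_cos]
  simp [sin_two_pi_mul_int]

theorem integral_sub_half_mul_sin (k : ℤ) :
    ∫ x in (0 : ℝ)..1, (x - 1 / 2) * sin (2 * π * k * x) = -(1 / (2 * π * k)) := by
  rcases eq_or_ne k 0 with rfl | hk
  · simp
  have hk' : 2 * π * (k : ℝ) ≠ 0 := by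
    have : (k : ℝ) ≠ 0 := by exact_mod_cast hk
    positivity
  set c := 2 * π * (k : ℝ) with hc
  have hd : ∀ x ∈ uIcc (0 : ℝ) 1, HasDerivAt
      (fun x => -((x - 1 / 2) * cos (c * x) / c) + sin (c * x) / c ^ 2)
      ((x - 1 / 2) * sin (c * x)) x := by
    intro x _
    have h1 : HasDerivAt (fun x => c * x) c x := by simpa using (hasDerivAt_id x).const_mul c
    have h2 : HasDerivAt (fun x : ℝ => x - 1 / 2) 1 x := (hasDerivAt_id x).sub_const _
    convert! ((h2.mul h1.cos).div_const c).neg.add (h1.sin.div_const (c ^ 2)) using 1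
    field_simp
    ring
  rw [integral_eq_sub_of_hasDerivAt hd (Continuous.intervalIntegrable (by fun_prop) _ _)]
  simp only [mul_one, mul_zero, sin_zero, cos_zero, hc, sin_two_pi_mul_int, cos_two_pi_mul_int]
  field_simp
  ring

theorem integral_sub_half_sq_mul_cos {k : ℤ} (hk : k ≠ 0) :
    ∫ x in (0 : ℝ)..1, (x - 1 / 2) ^ 2 * cos (2 * π * k * x) = 2 / (2 * π * k) ^ 2 := by
  have hk' : 2 * π * (k : ℝ) ≠ 0 := by
    have : (k : ℝ) ≠ 0 := by exact_mod_cast hk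
    positivity
  set c := 2 * π * (k : ℝ) with hc
  have hd : ∀ x ∈ uIcc (0 : ℝ) 1, HasDerivAt
      (fun x => (x - 1 / 2) ^ 2 * sin (c * x) / c + 2 * (x - 1 / 2) * cos (c * x) / c ^ 2
        - 2 * sin (c * x) / c ^ 3)
      ((x - 1 / 2) ^ 2 * cos (c * x)) x := by
    intro x _
    have h1 : HasDerivAt (fun x => c * x) c x := by simpa using (hasDerivAt_id x).const_mul c
    have h2 : HasDerivAt (fun x : ℝ => x - 1 / 2) 1 x := (hasDerivAt_id x).sub_const _
    convert! ((((h2.pow 2).mul h1.sin).div_const c).add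
      (((h2.const_mul 2).mul h1.cos).div_const (c ^ 2))).sub
      ((h1.sin.const_mul 2).div_const (c ^ 3)) using 1
    simp
    field_simp
    ring
  rw [integral_eq_sub_of_hasDerivAt hd (Continuous.intervalIntegrable (by fun_prop) _ _)]
  simp only [mul_one, mul_zero, sin_zero, cos_zero, hc, sin_two_pi_mul_int, cos_two_pi_mul_int]
  field_simp
  ring

theorem sinCoeff_sub_half (n : ℕ) : sinCoeff (fun x => x - 1 / 2) n = -(1 / (2 * π * n)) := by
  simpa [sinCoeff] using integral_sub_half_mul_sin n

theorem cosCoeff_sub_half_sq {n : ℕ} (hn : n ≠ 0) :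
    cosCoeff (fun x => (x - 1 / 2) ^ 2) n = 2 / (2 * π * n) ^ 2 := by
  simpa [cosCoeff] using integral_sub_half_sq_mul_cos (k := n) (by exact_mod_cast hn)

theorem cosCoeff_sub_half_mul_sin (m n : ℕ) :
    cosCoeff (fun x => (x - 1 / 2) * sin (2 * π * m * x)) n =
      -(1 / (4 * π)) * (1 / ((m : ℝ) + n) + 1 / ((m : ℝ) - n)) := by
  have h1 := integral_sub_half_mul_sin (m + n)
  have h2 := integral_sub_half_mul_sin (m - n)
  have h3 : cosCoeff (fun x => (x - 1 / 2) * sin (2 * π * m * x)) n =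
      ((∫ x in (0 : ℝ)..1, (x - 1 / 2) * sin (2 * π * (m + n : ℤ) * x)) +
        ∫ x in (0 : ℝ)..1, (x - 1 / 2) * sin (2 * π * (m - n : ℤ) * x)) / 2 := by
    rw [← intervalIntegral.integral_add (Continuous.intervalIntegrable (by fun_prop) _ _)
      (Continuous.intervalIntegrable (by fun_prop) _ _), ← intervalIntegral.integral_div, cosCoeff]
    refine intervalIntegral.integral_congr fun x _ => ?_
    have e1 : 2 * π * ((m + n : ℤ) : ℝ) * x = 2 * π * m * x + 2 * π * n * x := by push_cast; ring
    have e2 : 2 * π * ((m - n : ℤ) : ℝ) * x = 2 * π * m * x - 2 * π * n * x := by push_cast; ring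
    simp only [e1, e2, sin_add, sin_sub]
    ring
  rw [h3, h1, h2]
  push_cast
  rw [one_div, one_div, mul_inv, mul_inv, mul_inv, one_div, one_div, one_div, mul_inv]
  ring

/-- Reflection `x ↦ 1 - x` of an integral over the unit interval. -/
theorem integral_comp_one_sub (f : ℝ → ℝ) :
    ∫ x in (0 : ℝ)..1, f (1 - x) = ∫ x in (0 : ℝ)..1, f x := by
  simp [intervalIntegral.integral_comp_sub_left]

theorem sin_two_pi_mul_one_sub (n : ℕ) (x : ℝ) :
    sin (2 * π * n * (1 - x)) = -sin (2 * π * n * x) := by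
  have h := sin_two_pi_mul_int n
  have h' := cos_two_pi_mul_int n
  simp only [Int.cast_natCast] at h h'
  rw [mul_sub, mul_one, sin_sub, h, h']
  ring

theorem cos_two_pi_mul_one_sub (n : ℕ) (x : ℝ) :
    cos (2 * π * n * (1 - x)) = cos (2 * π * n * x) := by
  have h := sin_two_pi_mul_int n
  have h' := cos_two_pi_mul_int n
  simp only [Int.cast_natCast] at h h'
  rw [mul_sub, mul_one, cos_sub, h, h']
  ring

theorem sinCoeff_eq_zero_of_symm {f : ℝ → ℝ} (hf : ∀ x, f (1 - x) = f x) (n : ℕ) :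
    sinCoeff f n = 0 := by
  have h := integral_comp_one_sub (fun x => f x * sin (2 * π * n * x))
  simp only [hf, sin_two_pi_mul_one_sub, mul_neg, intervalIntegral.integral_neg] at h
  rw [sinCoeff]
  linarith

theorem cosCoeff_eq_zero_of_antisymm {f : ℝ → ℝ} (hf : ∀ x, f (1 - x) = -f x) (n : ℕ) :
    cosCoeff f n = 0 := by
  have h := integral_comp_one_sub (fun x => f x * cos (2 * π * n * x))
  simp only [hf, cos_two_pi_mul_one_sub, neg_mul, intervalIntegral.integral_neg] at h
  rw [cosCoeff]
  linarith

/-- The function `log π - log (sin (π x))`, equal to `log Γ(x) + log Γ(1 - x)` on `(0, 1)`. -/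
noncomputable def logPiDivSin (x : ℝ) : ℝ := log π - log (sin (π * x))

theorem logPiDivSin_one_sub (x : ℝ) : logPiDivSin (1 - x) = logPiDivSin x := by
  rw [logPiDivSin, logPiDivSin, mul_sub, mul_one, sin_pi_sub]

theorem log_Gamma_add_log_Gamma_one_sub_s15 {x : ℝ} (hx : x ∈ Ioo (0 : ℝ) 1) :
    log (Gamma x) + log (Gamma (1 - x)) = logPiDivSin x := by
  have hs : 0 < sin (π * x) :=
    sin_pos_of_pos_of_lt_pi (mul_pos pi_pos hx.1) (by nlinarith [hx.2, pi_pos])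
  rw [← log_mul (Gamma_pos_of_pos hx.1).ne' (Gamma_pos_of_pos (by linarith [hx.2])).ne',
    Gamma_mul_Gamma_one_sub, log_div pi_ne_zero hs.ne', logPiDivSin]

theorem ContinuousOn.sqIntegrable {f : ℝ → ℝ} (hf : ContinuousOn f (Icc 0 1)) :
    SqIntegrable f := by
  obtain ⟨C, hC⟩ := isCompact_Icc.exists_bound_of_continuousOn hf
  refine MemLp.of_bound ((hf.mono Ioc_subset_Icc_self).aestronglyMeasurable measurableSet_Ioc) C ?_
  filter_upwards [ae_restrict_mem measurableSet_Ioc] with x hx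
  exact hC x (Ioc_subset_Icc_self hx)

theorem SqIntegrable.mul_continuousOn {f g : ℝ → ℝ} (hf : SqIntegrable f)
    (hg : ContinuousOn g (Icc 0 1)) : SqIntegrable (fun x => g x * f x) := by
  obtain ⟨C, hC⟩ := isCompact_Icc.exists_bound_of_continuousOn hg
  refine MemLp.of_le_mul (c := C) hf
    (((hg.mono Ioc_subset_Icc_self).aestronglyMeasurable measurableSet_Ioc).mul hf.1) ?_
  filter_upwards [ae_restrict_mem measurableSet_Ioc] with x hx
  rw [norm_mul]
  gcongr
  exact hC x (Ioc_subset_Icc_self hx)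

theorem sqIntegrable_log : SqIntegrable log := by
  rw [SqIntegrable, memLp_two_iff_integrable_sq measurable_log.aestronglyMeasurable]
  have h : IntegrableOn (fun x : ℝ => 16 * x ^ (-(1 / 2) : ℝ)) (Ioc 0 1) := by
    rw [← intervalIntegrable_iff_integrableOn_Ioc_of_le zero_le_one]
    exact (intervalIntegral.intervalIntegrable_rpow' (by norm_num)).const_mul _
  refine Integrable.mono' h (measurable_log.pow_const 2).aestronglyMeasurable ?_
  filter_upwards [ae_restrict_mem measurableSet_Ioc] with x hx
  have h1 := abs_log_mul_self_rpow_lt x (1 / 4) hx.1 hx.2 (by norm_num)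
  have h2 : (log x * x ^ (1 / 4 : ℝ)) ^ 2 ≤ 16 := by
    rw [← sq_abs]
    nlinarith [abs_nonneg (log x * x ^ (1 / 4 : ℝ))]
  have h3 : (x ^ (1 / 4 : ℝ)) ^ 2 = x ^ (1 / 2 : ℝ) := by
    rw [← rpow_natCast, ← rpow_mul hx.1.le]
    norm_num
  rw [mul_pow, h3] at h2
  have h4 : 0 < x ^ (1 / 2 : ℝ) := rpow_pos_of_pos hx.1 _
  rw [rpow_neg hx.1.le, norm_of_nonneg (sq_nonneg _), ← div_eq_mul_inv, le_div_iff₀ h4]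
  exact h2

theorem continuousOn_log_Gamma_add_one :
    ContinuousOn (fun x => log (Gamma (x + 1))) (Icc 0 1) := by
  intro x hx
  have h : 0 < x + 1 := by linarith [hx.1]
  have h1 : ContinuousAt Gamma (x + 1) := (differentiableAt_Gamma fun m => by
    have : (0 : ℝ) ≤ m := m.cast_nonneg
    intro h'
    linarith).continuousAt
  exact ((h1.comp (f := fun x => x + 1) (by fun_prop)).log
    (Gamma_pos_of_pos h).ne').continuousWithinAt

theorem sqIntegrable_log_Gamma : SqIntegrable (fun x => log (Gamma x)) := by
  refine (memLp_congr_ae ?_).mp (continuousOn_log_Gamma_add_one.sqIntegrable.sub sqIntegrable_log)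
  filter_upwards [ae_restrict_mem measurableSet_Ioc] with x hx
  simp only [Pi.sub_apply]
  rw [Gamma_add_one hx.1.ne', log_mul hx.1.ne' (Gamma_pos_of_pos hx.1).ne']
  ring

theorem SqIntegrable.comp_one_sub {f : ℝ → ℝ} (hf : SqIntegrable f) :
    SqIntegrable (fun x => f (1 - x)) := by
  rw [SqIntegrable, ← restrict_Ioo_eq_restrict_Ioc] at *
  have h := (volume.measurePreserving_sub_left (1 : ℝ)).restrict_preimage
    (measurableSet_Ioo (a := (0 : ℝ)) (b := 1))
  rw [show (fun x : ℝ => 1 - x) ⁻¹' Ioo 0 1 = Ioo 0 1 by simp] at h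
  exact hf.comp_measurePreserving h

theorem sqIntegrable_logPiDivSin : SqIntegrable logPiDivSin := by
  have h := sqIntegrable_log_Gamma.add sqIntegrable_log_Gamma.comp_one_sub
  rw [SqIntegrable, ← restrict_Ioo_eq_restrict_Ioc] at *
  refine (memLp_congr_ae ?_).mp h
  filter_upwards [ae_restrict_mem measurableSet_Ioo] with x hx
  exact log_Gamma_add_log_Gamma_one_sub_s15 hx

theorem integral_log_Gamma_mul_of_symm {f : ℝ → ℝ} (hf : ContinuousOn f (Icc 0 1))
    (hs : ∀ x, f (1 - x) = f x) :
    ∫ x in (0 : ℝ)..1, log (Gamma x) * f x = (∫ x in (0 : ℝ)..1, logPiDivSin x * f x) / 2 := by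
  have hi : IntervalIntegrable (fun x => log (Gamma x) * f x) volume 0 1 :=
    sqIntegrable_log_Gamma.intervalIntegrable_mul hf.sqIntegrable
  have hj : IntervalIntegrable (fun x => log (Gamma (1 - x)) * f x) volume 0 1 :=
    sqIntegrable_log_Gamma.comp_one_sub.intervalIntegrable_mul hf.sqIntegrable
  have h := integral_comp_one_sub (fun x => log (Gamma x) * f x)
  simp only [hs] at h
  have h2 : ∫ x in (0 : ℝ)..1, logPiDivSin x * f x =
      ∫ x in (0 : ℝ)..1, (log (Gamma x) * f x + log (Gamma (1 - x)) * f x) :=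
    intervalIntegral.integral_congr_Ioo_of_le zero_le_one fun x hx => by
      simp only [← log_Gamma_add_log_Gamma_one_sub_s15 hx]
      ring
  rw [h2, intervalIntegral.integral_add hi hj, h]
  ring

theorem integral_logPiDivSin : ∫ x in (0 : ℝ)..1, logPiDivSin x = log (2 * π) := by
  have h : ∫ x in (0 : ℝ)..1, log (sin (π * x)) = -log 2 := by
    rw [intervalIntegral.integral_comp_mul_left (fun x => log (sin x)) pi_ne_zero]
    simp only [mul_zero, mul_one, integral_log_sin_zero_pi, smul_eq_mul]
    field_simp
  have hi : IntervalIntegrable (fun x => log (sin (π * x))) volume 0 1 := by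
    have := (intervalIntegrable_const (c := log π)).sub
      sqIntegrable_logPiDivSin.intervalIntegrable
    refine this.congr ?_
    exact fun x _ => by simp [logPiDivSin]
  simp only [logPiDivSin]
  rw [intervalIntegral.integral_sub intervalIntegrable_const hi, h,
    log_mul two_ne_zero pi_ne_zero]
  simp
  ring

theorem sin_mul_sum_cos_odd (n : ℕ) (x : ℝ) :
    sin (π * x) * ∑ j ∈ Finset.range n, 2 * cos (π * x + 2 * π * j * x) =
      sin (2 * π * n * x) := by
  induction n with
  | zero => simp
  | succ n ih =>
    rw [Finset.sum_range_succ, mul_add, ih,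
      show 2 * π * ((n + 1 : ℕ) : ℝ) * x = (π * x + 2 * π * n * x) + π * x by push_cast; ring,
      show 2 * π * n * x = (π * x + 2 * π * n * x) - π * x by ring, sin_add, sin_sub]
    ring_nf

theorem integral_cos_mul_sum_cos_odd (n : ℕ) :
    ∫ x in (0 : ℝ)..1, cos (π * x) * ∑ j ∈ Finset.range (n + 1),
      2 * cos (π * x + 2 * π * j * x) = 1 := by
  have h : ∀ x : ℝ, cos (π * x) * ∑ j ∈ Finset.range (n + 1), 2 * cos (π * x + 2 * π * j * x) =
      ∑ j ∈ Finset.range (n + 1), (cos (2 * π * ((j + 1 : ℕ) : ℤ) * x)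
        + cos (2 * π * ((j : ℕ) : ℤ) * x)) := by
    intro x
    rw [Finset.mul_sum]
    refine Finset.sum_congr rfl fun j _ => ?_
    have e1 : 2 * π * (((j + 1 : ℕ) : ℤ) : ℝ) * x = (π * x + 2 * π * j * x) + π * x := by
      push_cast
      ring
    have e2 : 2 * π * (((j : ℕ) : ℤ) : ℝ) * x = (π * x + 2 * π * j * x) - π * x := by
      push_cast
      ring
    rw [e1, e2]
    generalize π * x + 2 * π * j * x = y
    rw [cos_add, cos_sub]
    ring
  simp_rw [h]
  rw [intervalIntegral.integral_finsetSum fun j _ =>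
    Continuous.intervalIntegrable (by fun_prop) _ _]
  have h2 : ∀ j : ℕ, ∫ x in (0 : ℝ)..1, (cos (2 * π * ((j + 1 : ℕ) : ℤ) * x)
        + cos (2 * π * ((j : ℕ) : ℤ) * x)) = if j = 0 then 1 else 0 := by
    intro j
    rw [intervalIntegral.integral_add (Continuous.intervalIntegrable (by fun_prop) _ _)
      (Continuous.intervalIntegrable (by fun_prop) _ _),
      integral_cos_two_pi_mul (by positivity)]
    split_ifs with hj
    · simp [hj]
    · rw [integral_cos_two_pi_mul (by exact_mod_cast hj), add_zero]
  simp_rw [h2]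
  simp

theorem cosCoeff_logPiDivSin (n : ℕ) :
    cosCoeff logPiDivSin (n + 1) = 1 / (2 * ((n + 1 : ℕ) : ℝ)) := by
  set N : ℕ := n + 1 with hN
  have hN0 : (N : ℝ) ≠ 0 := by positivity
  set W : ℝ → ℝ := fun x => ∑ j ∈ Finset.range N, 2 * cos (π * x + 2 * π * j * x) with hW
  have hWc : Continuous W := by fun_prop
  have hi1 : IntervalIntegrable (fun x => logPiDivSin x * cos (2 * π * N * x)) volume 0 1 :=
    sqIntegrable_logPiDivSin.intervalIntegrable.mul_continuousOn (by fun_prop)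
  have hi2 : IntervalIntegrable (fun x => (2 * π * N) * (logPiDivSin x * cos (2 * π * N * x))
      - π * (cos (π * x) * W x)) volume 0 1 :=
    (hi1.const_mul _).sub (Continuous.intervalIntegrable (by fun_prop) _ _)
  have hcont : Continuous fun x => log π * sin (2 * π * N * x)
      - sin (π * x) * log (sin (π * x)) * W x := by
    have := continuous_mul_log.comp (f := fun x : ℝ => sin (π * x)) (by fun_prop)
    exact (by fun_prop : Continuous fun x => log π * sin (2 * π * N * x)).sub (this.mul hWc)
  have key := integral_eq_sub_of_hasDerivAt_of_le zero_le_one hcont.continuousOn (fun x hx => ?_) hi2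
  · rw [intervalIntegral.integral_sub (hi1.const_mul _)
      (Continuous.intervalIntegrable (by fun_prop) _ _), intervalIntegral.integral_const_mul,
      intervalIntegral.integral_const_mul, hW, integral_cos_mul_sum_cos_odd n] at key
    have hs := sin_two_pi_mul_int N
    rw [Int.cast_natCast] at hs
    simp only [mul_one, mul_zero, sin_zero, sin_pi, hs] at key
    rw [cosCoeff]
    have := pi_pos
    field_simp
    have h3 : π * (2 * N * (∫ x in (0 : ℝ)..1, logPiDivSin x * cos (2 * π * N * x)) - 1) = 0 := by
      linarith
    have := (mul_eq_zero.mp h3).resolve_left pi_ne_zero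
    linarith
  · have hs : 0 < sin (π * x) :=
      sin_pos_of_pos_of_lt_pi (mul_pos pi_pos hx.1) (by nlinarith [hx.2, pi_pos])
    have hd1 : HasDerivAt (fun x => π * x) π x := by simpa using (hasDerivAt_id x).const_mul π
    have hd2 : HasDerivAt (fun x => 2 * π * N * x) (2 * π * N) x := by
      simpa using (hasDerivAt_id x).const_mul (2 * π * N)
    have hd := (hd2.sin.const_mul (log π)).sub ((hd1.sin.log hs.ne').mul hd2.sin)
    have he : (fun x => log π * sin (2 * π * N * x) - sin (π * x) * log (sin (π * x)) * W x) =
        fun x => log π * sin (2 * π * N * x) - log (sin (π * x)) * sin (2 * π * N * x) := by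
      ext y
      rw [← sin_mul_sum_cos_odd N y]
      ring
    rw [he]
    refine hd.congr_deriv ?_
    have hWx : sin (2 * π * N * x) = sin (π * x) * W x := (sin_mul_sum_cos_odd N x).symm
    rw [logPiDivSin, hWx]
    field_simp
    ring

theorem cosCoeff_log_Gamma (n : ℕ) :
    cosCoeff (fun x => log (Gamma x)) (n + 1) = 1 / (4 * ((n + 1 : ℕ) : ℝ)) := by
  have h := cosCoeff_logPiDivSin n
  rw [cosCoeff] at h ⊢
  rw [integral_log_Gamma_mul_of_symm (by fun_prop) (cos_two_pi_mul_one_sub _), h]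
  ring

theorem integral_log_Gamma : ∫ x in (0 : ℝ)..1, log (Gamma x) = log (2 * π) / 2 := by
  have h := integral_log_Gamma_mul_of_symm (f := fun _ => 1) (by fun_prop) (fun _ => rfl)
  simpa [integral_logPiDivSin] using h

theorem integral_log_mul_exp_neg :
    ∫ t in Ioi (0 : ℝ), log t * exp (-t) = -eulerMascheroniConstant := by
  have h1 : HasDerivAt Complex.Gamma
      (∫ t : ℝ in Ioi 0, (t : ℂ) ^ ((1 : ℂ) - 1) * (log t * exp (-t))) 1 := by
    refine (Complex.hasDerivAt_GammaIntegral (s := 1) (by simp)).congr_of_eventuallyEq ?_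
    have : {s : ℂ | 0 < s.re} ∈ 𝓝 (1 : ℂ) :=
      (isOpen_lt continuous_const Complex.continuous_re).mem_nhds (by simp)
    filter_upwards [this] with s hs using Complex.Gamma_eq_integral hs
  have h2 := h1.unique Complex.hasDerivAt_Gamma_one
  simp only [sub_self, Complex.cpow_zero, one_mul, ← Complex.ofReal_mul] at h2
  rw [integral_complex_ofReal] at h2
  exact_mod_cast h2

theorem integrableOn_log_mul_exp_neg :
    IntegrableOn (fun t => log t * exp (-t)) (Ioi 0) := by
  refine Integrable.of_integral_ne_zero ?_
  rw [integral_log_mul_exp_neg]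
  linarith [one_half_lt_eulerMascheroniConstant]

/-- The entire function `(1 - exp (-z)) / z`. -/
noncomputable def einIntegrand : ℂ → ℂ := dslope (fun z => 1 - Complex.exp (-z)) 0

theorem mul_einIntegrand (z : ℂ) : z * einIntegrand z = 1 - Complex.exp (-z) := by
  simpa [einIntegrand] using sub_smul_dslope (fun z => 1 - Complex.exp (-z)) 0 z

theorem differentiable_einIntegrand : Differentiable ℂ einIntegrand := by
  rw [← differentiableOn_univ]
  exact (Complex.differentiableOn_dslope univ_mem).mpr (by fun_prop)

theorem exists_ein : ∃ P : ℂ → ℂ, P 0 = 0 ∧ ∀ z, HasDerivAt P (einIntegrand z) z := by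
  obtain ⟨P, h0, h⟩ := differentiable_einIntegrand.isExactOn_univ.with_val_at 0 0
  exact ⟨P, h0, fun z => h z (mem_univ z)⟩

/-- The entire exponential integral `Ein`, the primitive of `(1 - exp (-z)) / z` vanishing
at `0`. -/
noncomputable def ein : ℂ → ℂ := exists_ein.choose

theorem ein_zero : ein 0 = 0 := exists_ein.choose_spec.1

theorem hasDerivAt_ein (z : ℂ) : HasDerivAt ein (einIntegrand z) z := exists_ein.choose_spec.2 z

theorem HasDerivAt.ein_re {c : ℝ → ℂ} {c' : ℂ} {x : ℝ} (hc : HasDerivAt c c' x) :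
    HasDerivAt (fun x => (ein (c x)).re) (einIntegrand (c x) * c').re x :=
  Complex.reCLM.hasFDerivAt.comp_hasDerivAt x ((hasDerivAt_ein (c x)).comp x hc)

theorem continuous_ein : Continuous ein :=
  continuous_iff_continuousAt.mpr fun z => (hasDerivAt_ein z).continuousAt

theorem integral_log_mul_exp_neg_eq {T : ℝ} (hT : 0 ≤ T) :
    ∫ t in (0 : ℝ)..T, log t * exp (-t) = (1 - exp (-T)) * log T - (ein T).re := by
  have hD := differentiable_einIntegrand.continuous
  have hexp : ∀ t : ℝ, t * (einIntegrand t).re = 1 - exp (-t) := fun t => by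
    have := congrArg Complex.re (mul_einIntegrand t)
    rwa [← Complex.ofReal_neg, ← Complex.ofReal_exp, ← Complex.ofReal_one, ← Complex.ofReal_sub,
      Complex.ofReal_re, Complex.re_ofReal_mul] at this
  have hcont : Continuous fun t : ℝ => (1 - exp (-t)) * log t - (ein t).re := by
    have h1 : Continuous fun t : ℝ => t * log t * (einIntegrand t).re :=
      continuous_mul_log.mul (by fun_prop)
    have h2 : Continuous fun t : ℝ => (ein t).re :=
      Complex.continuous_re.comp (continuous_ein.comp Complex.continuous_ofReal)
    refine (h1.sub h2).congr fun t => ?_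
    simp only [Pi.sub_apply, ← hexp]
    ring
  have hint : IntervalIntegrable (fun t => log t * exp (-t)) volume 0 T :=
    (intervalIntegrable_iff_integrableOn_Ioc_of_le hT).mpr
      (integrableOn_log_mul_exp_neg.mono_set Ioc_subset_Ioi_self)
  rw [integral_eq_sub_of_hasDerivAt_of_le hT hcont.continuousOn (fun t ht => ?_) hint]
  · simp [ein_zero]
  · have h1 : HasDerivAt (fun t : ℝ => 1 - exp (-t)) (exp (-t)) t := by
      simpa using ((hasDerivAt_neg t).exp).const_sub 1
    have h2 := (h1.mul (hasDerivAt_log ht.1.ne')).sub (hasDerivAt_id t).ofReal_comp.ein_re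
    refine h2.congr_deriv ?_
    rw [← hexp]
    have := ht.1.ne'
    simp
    field_simp
    ring

theorem tendsto_ein_re_sub_log :
    Tendsto (fun T : ℝ => (ein T).re - log T) atTop (𝓝 eulerMascheroniConstant) := by
  have h1 := intervalIntegral_tendsto_integral_Ioi 0 integrableOn_log_mul_exp_neg tendsto_id
  rw [integral_log_mul_exp_neg] at h1
  have h2 : Tendsto (fun T : ℝ => exp (-T) * log T) atTop (𝓝 0) := by
    refine squeeze_zero' (g := fun T => T * exp (-T)) ?_ ?_ ?_
    · filter_upwards [eventually_ge_atTop 1] with T hT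
      have := log_nonneg hT
      positivity
    · filter_upwards [eventually_ge_atTop 1] with T hT
      rw [mul_comm]
      gcongr
      exact (log_le_sub_one_of_pos (by linarith)).trans (by linarith)
    · simpa using tendsto_pow_mul_exp_neg_atTop_nhds_zero 1
  have h3 := (h1.add h2).neg
  simp only [add_zero, neg_neg, id] at h3
  refine h3.congr' ?_
  filter_upwards [eventually_ge_atTop 0] with T hT
  rw [integral_log_mul_exp_neg_eq hT]
  ring

theorem ein_re_mul_I_sub (T : ℝ) :
    (ein (T * Complex.I)).re - (ein T).re =
      ∫ θ in (0 : ℝ)..π / 2, exp (-T * cos θ) * -sin (T * sin θ) := by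
  have hd : ∀ θ ∈ uIcc 0 (π / 2), HasDerivAt
      (fun θ : ℝ => (ein (T * Complex.exp (θ * Complex.I))).re)
      (exp (-T * cos θ) * -sin (T * sin θ)) θ := by
    intro θ _
    have h1 : HasDerivAt (fun θ : ℝ => T * Complex.exp (θ * Complex.I))
        (T * (Complex.exp (θ * Complex.I) * (1 * Complex.I))) θ :=
      (((hasDerivAt_id θ).ofReal_comp.mul_const Complex.I).cexp).const_mul _
    refine h1.ein_re.congr_deriv ?_
    rw [show einIntegrand (T * Complex.exp (θ * Complex.I)) *
        (T * (Complex.exp (θ * Complex.I) * (1 * Complex.I))) =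
        (T * Complex.exp (θ * Complex.I)) * einIntegrand (T * Complex.exp (θ * Complex.I)) *
          Complex.I by ring, mul_einIntegrand, Complex.mul_I_re, Complex.sub_im, Complex.exp_im]
    have hre : (-(T * Complex.exp (θ * Complex.I))).re = -T * cos θ := by
      simp [Complex.exp_ofReal_mul_I_re]
    have him : (-(T * Complex.exp (θ * Complex.I))).im = -(T * sin θ) := by
      simp [Complex.exp_ofReal_mul_I_im]
    rw [hre, him, sin_neg]
    simp
  rw [integral_eq_sub_of_hasDerivAt hd (Continuous.intervalIntegrable (by fun_prop) _ _)]
  simp [Complex.exp_pi_div_two_mul_I]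

theorem tendsto_integral_exp_mul_sin :
    Tendsto (fun T : ℝ => ∫ θ in (0 : ℝ)..π / 2, exp (-T * cos θ) * -sin (T * sin θ))
      atTop (𝓝 0) := by
  have h := intervalIntegral.tendsto_integral_filter_of_dominated_convergence
    (μ := volume) (a := 0) (b := π / 2) (l := atTop)
    (F := fun (T θ : ℝ) => exp (-T * cos θ) * -sin (T * sin θ)) (f := fun _ => 0)
    (fun _ => 1) ?_ ?_ intervalIntegrable_const ?_
  · simpa using h
  · exact Eventually.of_forall fun T => Continuous.aestronglyMeasurable (by fun_prop)
  · filter_upwards [eventually_ge_atTop 0] with T hT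
    refine Eventually.of_forall fun θ hθ => ?_
    rw [uIoc_of_le (by positivity)] at hθ
    have hc : 0 ≤ cos θ := cos_nonneg_of_mem_Icc ⟨by linarith [hθ.1, pi_pos], hθ.2⟩
    rw [norm_mul, norm_neg, norm_of_nonneg (exp_pos _).le]
    have h1 : exp (-T * cos θ) ≤ 1 := exp_le_one_iff.mpr (by nlinarith)
    have h2 : ‖sin (T * sin θ)‖ ≤ 1 := abs_sin_le_one _
    exact mul_le_one₀ h1 (norm_nonneg _) h2
  · have hne : ∀ᵐ θ : ℝ, θ ≠ π / 2 := by simp [ae_iff]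
    filter_upwards [hne] with θ hne hθ
    rw [uIoc_of_le (by positivity)] at hθ
    have hc : 0 < cos θ := cos_pos_of_mem_Ioo ⟨by linarith [hθ.1, pi_pos], lt_of_le_of_ne hθ.2 hne⟩
    have h1 : Tendsto (fun T : ℝ => exp (-T * cos θ)) atTop (𝓝 0) := by
      refine tendsto_exp_atBot.comp ?_
      simp only [neg_mul]
      exact tendsto_neg_atTop_atBot.comp (tendsto_id.atTop_mul_const hc)
    refine squeeze_zero_norm (fun T => ?_) h1
    rw [norm_mul, norm_neg, norm_of_nonneg (exp_pos _).le]
    exact mul_le_of_le_one_right (exp_pos _).le (abs_sin_le_one _)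

theorem tendsto_ein_re_mul_I_sub_log :
    Tendsto (fun T : ℝ => (ein (T * Complex.I)).re - log T) atTop
      (𝓝 eulerMascheroniConstant) := by
  have h := tendsto_integral_exp_mul_sin.add tendsto_ein_re_sub_log
  rw [zero_add] at h
  refine h.congr fun T => ?_
  rw [← ein_re_mul_I_sub]
  ring

theorem integral_log_mul_sin {m : ℕ} (hm : m ≠ 0) (N : ℕ) :
    ∫ x in (0 : ℝ)..N, log x * sin (2 * π * m * x) =
      -(ein ((2 * π * m * N : ℝ) * Complex.I)).re / (2 * π * m) := by
  have hm' : (m : ℝ) ≠ 0 := by exact_mod_cast hm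
  have hcos := cos_two_pi_mul_int (m * N)
  push_cast at hcos
  rw [← mul_assoc] at hcos
  set c : ℝ := 2 * π * m with hc
  have hc0 : c ≠ 0 := by positivity
  have hD := differentiable_einIntegrand.continuous
  have hre : ∀ x : ℝ, x * (einIntegrand ((c * x : ℝ) * Complex.I) * (c * Complex.I)).re =
      1 - cos (c * x) := fun x => by
    have h := congrArg Complex.re (mul_einIntegrand ((c * x : ℝ) * Complex.I))
    rw [← neg_mul, ← Complex.ofReal_neg, Complex.sub_re, Complex.exp_ofReal_mul_I_re, cos_neg,
      Complex.one_re] at h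
    rw [← h, ← Complex.re_ofReal_mul]
    push_cast
    ring_nf
  have hcont : Continuous fun x : ℝ =>
      ((1 - cos (c * x)) * log x - (ein ((c * x : ℝ) * Complex.I)).re) / c := by
    have h1 : Continuous fun x : ℝ =>
        x * log x * (einIntegrand ((c * x : ℝ) * Complex.I) * (c * Complex.I)).re :=
      continuous_mul_log.mul (by fun_prop)
    have h2 : Continuous fun x : ℝ => (ein ((c * x : ℝ) * Complex.I)).re :=
      Complex.continuous_re.comp (continuous_ein.comp (by fun_prop))
    refine ((h1.sub h2).div_const c).congr fun x => ?_
    simp only [Pi.sub_apply, ← hre]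
    ring
  have hint : IntervalIntegrable (fun x => log x * sin (c * x)) volume 0 N :=
    intervalIntegrable_log'.mul_continuousOn (by fun_prop)
  rw [integral_eq_sub_of_hasDerivAt_of_le N.cast_nonneg hcont.continuousOn (fun x hx => ?_) hint]
  · simp [ein_zero, hcos]
  · have h1 : HasDerivAt (fun x => c * x) c x := by simpa using (hasDerivAt_id x).const_mul c
    have h2 := (((h1.cos.const_sub 1).mul (hasDerivAt_log hx.1.ne')).sub
      (h1.ofReal_comp.mul_const Complex.I).ein_re).div_const c
    refine h2.congr_deriv ?_
    rw [← hre]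
    have := hx.1.ne'
    field_simp
    ring

theorem integral_sum_log_mul_sin (m N : ℕ) :
    ∫ x in (0 : ℝ)..1, (∑ k ∈ Finset.range N, log (x + k)) * sin (2 * π * m * x) =
      ∫ x in (0 : ℝ)..N, log x * sin (2 * π * m * x) := by
  have hint : ∀ a b : ℝ, IntervalIntegrable (fun x => log x * sin (2 * π * m * x)) volume a b :=
    fun a b => intervalIntegrable_log'.mul_continuousOn (by fun_prop)
  have hper : ∀ (k : ℕ) (x : ℝ), log (x + k) * sin (2 * π * m * x) =
      log (x + k) * sin (2 * π * m * (x + k)) := fun k x => by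
    have h := sin_two_pi_mul_int (m * k)
    have h' := cos_two_pi_mul_int (m * k)
    push_cast at h h'
    rw [← mul_assoc] at h h'
    rw [mul_add, sin_add, h, h']
    ring
  simp_rw [Finset.sum_mul, hper]
  rw [intervalIntegral.integral_finsetSum]
  · have h := sum_integral_adjacent_intervals (μ := volume) (n := N) (a := fun k : ℕ => (k : ℝ))
      (f := fun x => log x * sin (2 * π * m * x)) fun k _ => hint _ _
    rw [Nat.cast_zero] at h
    rw [← h]
    refine Finset.sum_congr rfl fun k _ => ?_
    rw [intervalIntegral.integral_comp_add_right (fun x => log x * sin (2 * π * m * x))]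
    simp [add_comm]
  · intro k _
    simpa using (hint k (1 + k)).comp_add_right (k : ℝ)

theorem log_Gamma_add_one {y : ℝ} (hy : 0 < y) :
    (log ∘ Gamma) (y + 1) = (log ∘ Gamma) y + log y := by
  simp only [Function.comp_apply]
  rw [Gamma_add_one hy.ne', log_mul hy.ne' (Gamma_pos_of_pos hy).ne', add_comm]

theorem continuousOn_log_Gamma_add_nat {N : ℕ} (hN : N ≠ 0) :
    ContinuousOn (fun x => log (Gamma (N + x))) (Icc 0 1) := by
  intro x hx
  have hN' : (0 : ℝ) < N := by positivity
  have h : 0 < N + x := by linarith [hx.1]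
  have h1 : ContinuousAt Gamma (N + x) :=
    (differentiableOn_Gamma_Ioi.differentiableAt (Ioi_mem_nhds h)).continuousAt
  exact ((h1.comp (f := fun x : ℝ => (N : ℝ) + x) (by fun_prop)).log
    (Gamma_pos_of_pos h).ne').continuousWithinAt

theorem integral_mul_sin_two_pi_mul (m : ℕ) :
    ∫ x in (0 : ℝ)..1, sin (2 * π * m * x) = 0 := by
  have := sinCoeff_eq_zero_of_symm (f := fun _ => 1) (fun _ => rfl) m
  simpa [sinCoeff] using this

/-- The error in the linear approximation of `log Γ` on `[N, N + 1]`. -/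
noncomputable def logGammaError (N : ℕ) (x : ℝ) : ℝ :=
  log (Gamma (N + x)) - log (Gamma N) - x * log N

theorem abs_logGammaError_le {N : ℕ} (hN : 2 ≤ N) {x : ℝ} (hx : x ∈ Ioc (0 : ℝ) 1) :
    |logGammaError N x| ≤ log N - log (N - 1) := by
  have h1 := BohrMollerup.f_add_nat_le convexOn_log_Gamma log_Gamma_add_one
    (by lia : N ≠ 0) hx.1 hx.2
  have h2 := BohrMollerup.f_add_nat_ge convexOn_log_Gamma log_Gamma_add_one hN hx.1
  simp only [Function.comp_apply] at h1 h2
  have hN' : (2 : ℝ) ≤ N := by exact_mod_cast hN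
  have h3 : log (N - 1) ≤ log N := log_le_log (by linarith) (by linarith)
  rw [logGammaError, abs_le]
  constructor
  · nlinarith [hx.1, hx.2]
  · linarith

theorem sinCoeff_log_Gamma_eq {m : ℕ} (hm : m ≠ 0) {N : ℕ} (hN : N ≠ 0) :
    sinCoeff (fun x => log (Gamma x)) m =
      (∫ x in (0 : ℝ)..1, logGammaError N x * sin (2 * π * m * x)) +
        ((ein ((2 * π * m * N : ℝ) * Complex.I)).re - log N) / (2 * π * m) := by
  have hs : Continuous fun x => sin (2 * π * m * x) := by fun_prop
  have hi0 : IntervalIntegrable (fun x => log (Gamma x) * sin (2 * π * m * x)) volume 0 1 :=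
    sqIntegrable_log_Gamma.intervalIntegrable.mul_continuousOn hs.continuousOn
  have hcE : ContinuousOn (logGammaError N) (Icc 0 1) :=
    ((continuousOn_log_Gamma_add_nat hN).sub continuousOn_const).sub (by fun_prop)
  have hi1 : IntervalIntegrable (fun x => logGammaError N x * sin (2 * π * m * x)) volume 0 1 :=
    hcE.sqIntegrable.intervalIntegrable.mul_continuousOn hs.continuousOn
  have hi2 : IntervalIntegrable (fun x => log N * ((x - 1 / 2) * sin (2 * π * m * x)))
      volume 0 1 := Continuous.intervalIntegrable (by fun_prop) _ _
  have hi3 : IntervalIntegrable (fun x => (log (Gamma N) + log N / 2) * sin (2 * π * m * x))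
      volume 0 1 := Continuous.intervalIntegrable (by fun_prop) _ _
  have h1 : ∫ x in (0 : ℝ)..1, (∑ k ∈ Finset.range N, log (x + k)) * sin (2 * π * m * x) =
      ∫ x in (0 : ℝ)..1, (((logGammaError N x * sin (2 * π * m * x) +
        log N * ((x - 1 / 2) * sin (2 * π * m * x))) +
        (log (Gamma N) + log N / 2) * sin (2 * π * m * x)) -
        log (Gamma x) * sin (2 * π * m * x)) := by
    refine intervalIntegral.integral_congr_Ioo_of_le zero_le_one fun x hx => ?_
    have h := BohrMollerup.f_add_nat_eq log_Gamma_add_one hx.1 N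
    simp only [Function.comp_apply] at h
    simp only [logGammaError]
    rw [add_comm (N : ℝ) x, h]
    ring
  rw [integral_sum_log_mul_sin, integral_log_mul_sin hm,
    intervalIntegral.integral_sub ((hi1.add hi2).add hi3) hi0,
    intervalIntegral.integral_add (hi1.add hi2) hi3, intervalIntegral.integral_add hi1 hi2,
    intervalIntegral.integral_const_mul, intervalIntegral.integral_const_mul,
    integral_mul_sin_two_pi_mul] at h1
  have h2 := sinCoeff_sub_half m
  rw [sinCoeff] at h2 ⊢
  rw [h2] at h1
  rw [sub_div]
  linear_combination h1

theorem tendsto_integral_logGammaError_mul_sin (m : ℕ) :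
    Tendsto (fun N : ℕ => ∫ x in (0 : ℝ)..1, logGammaError N x * sin (2 * π * m * x))
      atTop (𝓝 0) := by
  have h1 : Tendsto (fun N : ℕ => log N - log ((N : ℝ) - 1)) atTop (𝓝 0) := by
    have h := (tendsto_log_nat_add_one_sub_log).comp (tendsto_sub_atTop_nat 1)
    refine h.congr' ?_
    filter_upwards [eventually_ge_atTop 1] with N hN
    simp [Nat.cast_sub hN]
  refine squeeze_zero_norm' ?_ h1
  filter_upwards [eventually_ge_atTop 2] with N hN
  have h := intervalIntegral.norm_integral_le_of_norm_le_const (a := 0) (b := 1)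
    (f := fun x => logGammaError N x * sin (2 * π * m * x)) (C := log N - log (N - 1)) ?_
  · simpa using h
  · intro x hx
    rw [uIoc_of_le zero_le_one] at hx
    rw [norm_mul]
    exact (mul_le_of_le_one_right (norm_nonneg _) (abs_sin_le_one _)).trans
      (abs_logGammaError_le hN hx)

/-- **Kummer's formula** for the sine coefficients of `log Γ`. -/
theorem sinCoeff_log_Gamma {m : ℕ} (hm : m ≠ 0) :
    sinCoeff (fun x => log (Gamma x)) m =
      (eulerMascheroniConstant + log (2 * π) + log m) / (2 * π * m) := by
  have hm' : (m : ℝ) ≠ 0 := by exact_mod_cast hm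
  have hc : 0 < 2 * π * (m : ℝ) := by positivity
  have hT : Tendsto (fun N : ℕ => 2 * π * m * (N : ℝ)) atTop atTop :=
    tendsto_natCast_atTop_atTop.const_mul_atTop hc
  have h1 := (((tendsto_ein_re_mul_I_sub_log.comp hT).add_const (log (2 * π * m))).div_const
    (2 * π * m))
  have h2 := (tendsto_integral_logGammaError_mul_sin m).add h1
  rw [zero_add, log_mul (by positivity) hm', ← add_assoc] at h2
  refine tendsto_nhds_unique (tendsto_const_nhds.congr' ?_) h2
  filter_upwards [eventually_ge_atTop 1] with N hN
  have hN' : (N : ℝ) ≠ 0 := by positivity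
  rw [sinCoeff_log_Gamma_eq hm (by lia : N ≠ 0)]
  simp only [Function.comp_apply]
  rw [log_mul hc.ne' hN', log_mul (by positivity : 2 * π ≠ 0) hm']
  ring

theorem hasSum_one_div_sub_one_div_succ (m : ℕ) :
    HasSum (fun n : ℕ => 1 / ((n : ℝ) + 1 + m) - 1 / ((n : ℝ) + 1 + (m + 1))) (1 / ((m : ℝ) + 1)) := by
  rw [hasSum_iff_tendsto_nat_of_nonneg]
  · have h (N : ℕ) : ∑ n ∈ Finset.range N,
        (1 / ((n : ℝ) + 1 + m) - 1 / ((n : ℝ) + 1 + (m + 1))) =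
        1 / ((m : ℝ) + 1) - 1 / (N + (1 + m)) := by
      have := Finset.sum_range_sub' (fun n : ℕ => 1 / ((n : ℝ) + 1 + m)) N
      simp only [Nat.cast_add, Nat.cast_one, Nat.cast_zero] at this
      rw [show 1 / ((m : ℝ) + 1) - 1 / (N + (1 + m)) =
        1 / (0 + 1 + (m : ℝ)) - 1 / (N + 1 + m) by ring_nf, ← this]
      refine Finset.sum_congr rfl fun n _ => ?_
      ring_nf
    simp only [h]
    have h0 : Tendsto (fun N : ℕ => 1 / ((N : ℝ) + (1 + m))) atTop (𝓝 0) :=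
      (tendsto_const_nhds (x := (1 : ℝ))).div_atTop
        (tendsto_atTop_add_const_right _ _ tendsto_natCast_atTop_atTop)
    simpa using h0.const_sub (1 / ((m : ℝ) + 1))
  · intro n
    rw [sub_nonneg]
    exact one_div_le_one_div_of_le (by positivity) (by linarith)

theorem hasSum_one_div_sub_one_div_add (m : ℕ) :
    HasSum (fun n : ℕ => 1 / ((n : ℝ) + 1) - 1 / ((n : ℝ) + 1 + m)) (harmonic m : ℝ) := by
  induction m with
  | zero => simp
  | succ m ih =>
    convert! ih.add (hasSum_one_div_sub_one_div_succ m) using 1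
    · funext n
      push_cast
      ring
    · rw [harmonic_succ]
      push_cast
      simp

theorem hasSum_one_div_mul_add {m : ℕ} (hm : m ≠ 0) :
    HasSum (fun n : ℕ => 1 / (((n : ℝ) + 1) * (n + 1 + m))) (harmonic m / m : ℝ) := by
  have hm' : (m : ℝ) ≠ 0 := by exact_mod_cast hm
  convert! (hasSum_one_div_sub_one_div_add m).div_const (m : ℝ) using 1
  funext n
  have h1 : (n : ℝ) + 1 ≠ 0 := by positivity
  have h2 : (n : ℝ) + 1 + m ≠ 0 := by positivity
  field_simp
  ring

theorem sum_one_div_mul_sub (k : ℕ) :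
    ∑ i ∈ Finset.range k, 1 / (((i : ℝ) + 1) * ((k : ℝ) - i)) = 2 * harmonic k / ((k : ℝ) + 1) := by
  have h1 : ∑ i ∈ Finset.range k, 1 / ((k : ℝ) - i) = harmonic k := by
    rw [← Finset.sum_range_reflect, harmonic]
    push_cast
    refine Finset.sum_congr rfl fun i hi => ?_
    have hi := Finset.mem_range.mp hi
    rw [Nat.sub_sub, Nat.cast_sub (by lia)]
    push_cast
    ring
  have h2 : ∑ i ∈ Finset.range k, 1 / ((i : ℝ) + 1) = harmonic k := by
    simp [harmonic]
  rw [show (2 * harmonic k / ((k : ℝ) + 1) : ℝ) = (harmonic k + harmonic k) / ((k : ℝ) + 1) by ring]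
  nth_rewrite 1 [← h2]
  rw [← h1, ← Finset.sum_add_distrib, Finset.sum_div]
  refine Finset.sum_congr rfl fun i hi => ?_
  have hi : (i : ℝ) < k := by exact_mod_cast Finset.mem_range.mp hi
  have h3 : (k : ℝ) - i ≠ 0 := by linarith
  field_simp
  ring

theorem hasSum_one_div_mul_one_div_add_one_div_sub (k : ℕ) :
    HasSum (fun n : ℕ => 1 / ((n + 1 : ℕ) : ℝ) *
      (1 / (((k + 1 : ℕ) : ℝ) + (n + 1 : ℕ)) + 1 / (((k + 1 : ℕ) : ℝ) - (n + 1 : ℕ))))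
      (2 * harmonic k / ((k : ℝ) + 1)) := by
  have h1 := hasSum_one_div_mul_add k.succ_ne_zero
  have h2 : HasSum (fun n : ℕ => 1 / (((n : ℝ) + 1) * ((k : ℝ) - n)))
      (-(harmonic (k + 1) / ((k + 1 : ℕ) : ℝ)) + 2 * harmonic k / ((k : ℝ) + 1)) := by
    rw [← hasSum_nat_add_iff' (k + 1), Finset.sum_range_succ, sum_one_div_mul_sub]
    convert! h1.neg using 1
    · funext n
      have h3 : (n : ℝ) + 1 ≠ 0 := by positivity
      have h4 : (n : ℝ) + 1 + (k + 1) ≠ 0 := by positivity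
      have h5 : (k : ℝ) - (n + (k + 1)) = -(n + 1) := by ring
      push_cast
      rw [h5, ← div_neg]
      congr 1
      ring
    · simp
  convert! h1.add h2 using 1
  · funext n
    push_cast
    rw [mul_add, one_div_mul_one_div, one_div_mul_one_div]
    congr 2 <;> ring
  · simp

theorem integral_eq_zero_of_antisymm {f : ℝ → ℝ} (hf : ∀ x, f (1 - x) = -f x) :
    ∫ x in (0 : ℝ)..1, f x = 0 := by
  simpa [cosCoeff] using cosCoeff_eq_zero_of_antisymm hf 0

/-- The product of `x - 1 / 2` and `log (π / sin (π * x))`. -/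
noncomputable def subHalfMulLogPiDivSin (x : ℝ) : ℝ := (x - 1 / 2) * logPiDivSin x

theorem subHalfMulLogPiDivSin_one_sub (x : ℝ) :
    subHalfMulLogPiDivSin (1 - x) = -subHalfMulLogPiDivSin x := by
  rw [subHalfMulLogPiDivSin, subHalfMulLogPiDivSin, logPiDivSin_one_sub]
  ring

theorem sqIntegrable_subHalfMulLogPiDivSin : SqIntegrable subHalfMulLogPiDivSin :=
  sqIntegrable_logPiDivSin.mul_continuousOn (by fun_prop)

theorem sinCoeff_subHalfMulLogPiDivSin (k : ℕ) :
    sinCoeff subHalfMulLogPiDivSin (k + 1) =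
      -((log (2 * π) + harmonic k) / (2 * π * ((k + 1 : ℕ) : ℝ))) := by
  have hc : ContinuousOn (fun x : ℝ => (x - 1 / 2) * sin (2 * π * (k + 1 : ℕ) * x)) (Icc 0 1) := by
    fun_prop
  have h1 := hasSum_cosCoeff_mul_add_sinCoeff_mul hc.sqIntegrable sqIntegrable_logPiDivSin
  have h2 : HasSum _ _ :=
    (hasSum_one_div_mul_one_div_add_one_div_sub k).mul_left (-(1 / (4 * π)))
  have h3 := h1.unique (by
    convert! h2 using 1
    funext n
    rw [cosCoeff_sub_half_mul_sin, cosCoeff_logPiDivSin,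
      sinCoeff_eq_zero_of_symm logPiDivSin_one_sub]
    have : ((n + 1 : ℕ) : ℝ) ≠ 0 := by positivity
    field_simp
    ring)
  have h4 := integral_sub_half_mul_sin ((k + 1 : ℕ) : ℤ)
  rw [Int.cast_natCast] at h4
  rw [h4, integral_logPiDivSin] at h3
  have h5 : sinCoeff subHalfMulLogPiDivSin (k + 1) =
      ∫ x in (0 : ℝ)..1, (x - 1 / 2) * sin (2 * π * (k + 1 : ℕ) * x) * logPiDivSin x := by
    rw [sinCoeff]
    refine intervalIntegral.integral_congr fun x _ => ?_
    simp only [subHalfMulLogPiDivSin]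
    ring
  rw [h5]
  have h6 : ((k + 1 : ℕ) : ℝ) ≠ 0 := by positivity
  have h7 : (k : ℝ) + 1 ≠ 0 := by positivity
  rw [sub_eq_iff_eq_add] at h3
  rw [h3]
  push_cast
  field_simp
  ring

theorem integral_sub_half : ∫ x in (0 : ℝ)..1, (x - 1 / 2) = 0 :=
  integral_eq_zero_of_antisymm fun x => by ring

theorem integral_sub_half_sq : ∫ x in (0 : ℝ)..1, (x - 1 / 2) ^ 2 = 1 / 12 := by
  rw [intervalIntegral.integral_comp_sub_right (fun x => x ^ 2), integral_pow]
  norm_num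

/-- The Fourier expansion of the product `(x - 1 / 2) ^ 2 * log (π / sin (π * x))`, integrated in
two ways. -/
theorem hasSum_log_two_pi_add_harmonic_div_sq :
    HasSum (fun n : ℕ => (log (2 * π) + harmonic n) / ((n + 1 : ℕ) : ℝ) ^ 2)
      (log (2 * π) * (π ^ 2 / 6) + ∑' n : ℕ, 1 / ((n + 1 : ℕ) : ℝ) ^ 3) := by
  have hc : ContinuousOn (fun x : ℝ => x - 1 / 2) (Icc 0 1) := by fun_prop
  have hc2 : ContinuousOn (fun x : ℝ => (x - 1 / 2) ^ 2) (Icc 0 1) := by fun_prop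
  have h1 := hasSum_cosCoeff_mul_add_sinCoeff_mul hc.sqIntegrable sqIntegrable_subHalfMulLogPiDivSin
  have h2 := hasSum_cosCoeff_mul_add_sinCoeff_mul hc2.sqIntegrable sqIntegrable_logPiDivSin
  rw [integral_sub_half, zero_mul, sub_zero] at h1
  rw [integral_sub_half_sq, integral_logPiDivSin] at h2
  have h3 : ∑' n : ℕ, 1 / ((n + 1 : ℕ) : ℝ) ^ 3 = 2 * π ^ 2 *
      ((∫ x in (0 : ℝ)..1, (x - 1 / 2) ^ 2 * logPiDivSin x) - 1 / 12 * log (2 * π)) := by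
    refine HasSum.tsum_eq ?_
    convert! h2.mul_left (2 * π ^ 2) using 1
    funext n
    rw [cosCoeff_sub_half_sq n.succ_ne_zero, cosCoeff_logPiDivSin,
      sinCoeff_eq_zero_of_symm logPiDivSin_one_sub]
    have : ((n + 1 : ℕ) : ℝ) ≠ 0 := by positivity
    rw [Nat.succ_eq_add_one]
    field_simp
    ring
  rw [h3]
  convert! h1.mul_left (2 * π ^ 2) using 1
  · funext n
    rw [sinCoeff_sub_half, sinCoeff_subHalfMulLogPiDivSin,
      cosCoeff_eq_zero_of_antisymm subHalfMulLogPiDivSin_one_sub]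
    have : ((n + 1 : ℕ) : ℝ) ≠ 0 := by positivity
    field_simp
    ring
  · simp only [subHalfMulLogPiDivSin, ← mul_assoc, ← sq]
    ring

theorem LSeries.logMul_iterate_one (j n : ℕ) :
    (LSeries.logMul^[j] 1) n = Complex.log n ^ j := by
  induction j with
  | zero => simp
  | succ j ih => rw [Function.iterate_succ_apply', LSeries.logMul, ih, pow_succ']

theorem hasSum_log_pow_div_pow (j : ℕ) {k : ℕ} (hk : 2 ≤ k) :
    HasSum (fun n : ℕ => log ((n + 1 : ℕ) : ℝ) ^ j / ((n + 1 : ℕ) : ℝ) ^ k)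
      ((-1) ^ j * (iteratedDeriv j riemannZeta k).re) := by
  have hk' : 1 < ((k : ℂ)).re := by
    rw [Complex.natCast_re]
    exact_mod_cast hk
  have ha : LSeries.abscissaOfAbsConv 1 < ((k : ℂ).re : EReal) := by
    rw [LSeries.abscissaOfAbsConv_one]
    exact_mod_cast hk'
  have he : riemannZeta =ᶠ[𝓝 (k : ℂ)] LSeries 1 := by
    filter_upwards [(isOpen_lt continuous_const Complex.continuous_re).mem_nhds hk'] with s hs
    exact (LSeries_one_eq_riemannZeta hs).symm
  have hs : LSeriesSummable (LSeries.logMul^[j] 1) (k : ℂ) :=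
    LSeriesSummable_of_abscissaOfAbsConv_lt_re (by rwa [LSeries.absicssaOfAbsConv_logPowMul])
  have h1 : (-1) ^ j * iteratedDeriv j riemannZeta k = LSeries (LSeries.logMul^[j] 1) (k : ℂ) := by
    rw [he.iteratedDeriv_eq, LSeries_iteratedDeriv j ha, ← mul_assoc, ← mul_pow]
    simp
  have h2 := hs.LSeriesHasSum
  rw [LSeriesHasSum, ← h1, ← hasSum_nat_add_iff' 1] at h2
  have h3 := Complex.hasSum_re h2
  convert! h3 using 1
  · funext n
    rw [LSeries.term_of_ne_zero n.succ_ne_zero, LSeries.logMul_iterate_one, Complex.cpow_natCast,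
      Complex.natCast_log.symm]
    norm_cast
  · simp only [Finset.range_one, Finset.sum_singleton, LSeries.term_zero, sub_zero]
    rw [show ((-1 : ℂ)) ^ j = (((-1) ^ j : ℝ) : ℂ) by push_cast; rfl, Complex.re_ofReal_mul]

theorem deriv_riemannZeta_two :
    deriv riemannZeta 2 = 2 * π ^ 2 * deriv riemannZeta (-1) -
      π ^ 2 / 6 * (1 - eulerMascheroniConstant - Complex.log (2 * π)) := by
  have hz : HasDerivAt riemannZeta (deriv riemannZeta 2) 2 :=
    (differentiableAt_riemannZeta (by norm_num)).hasDerivAt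
  have hl : HasDerivAt (fun s => riemannZeta (1 - s)) (-deriv riemannZeta (-1)) 2 := by
    have h : HasDerivAt riemannZeta (deriv riemannZeta (-1)) (1 - 2) := by
      norm_num
      exact differentiableAt_riemannZeta (by norm_num)
    simpa using h.comp_const_sub (1 : ℂ) 2
  have hG : HasDerivAt Complex.Gamma (1 - eulerMascheroniConstant) 2 := by
    convert! Complex.hasDerivAt_Gamma_nat 1 using 1
    · simp [harmonic]
      ring
    · norm_num
  have hc : HasDerivAt (fun s : ℂ => Complex.cos (π * s / 2)) 0 2 := by
    have h : HasDerivAt (fun s : ℂ => π * s / 2) (π / 2) 2 := by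
      simpa using ((hasDerivAt_id (2 : ℂ)).const_mul (π : ℂ)).div_const 2
    convert! h.ccos using 1
    simp
  have hp : HasDerivAt (fun s : ℂ => (2 * π : ℂ) ^ (-s))
      ((2 * π : ℂ) ^ (-2 : ℂ) * Complex.log (2 * π) * -1) 2 :=
    (hasDerivAt_neg (2 : ℂ)).const_cpow (Or.inl (by simp [pi_ne_zero]))
  have hr := (((hp.const_mul 2).mul hG).mul hc).mul hz
  have he : (fun s => riemannZeta (1 - s)) =ᶠ[𝓝 2]
      fun s => 2 * (2 * π : ℂ) ^ (-s) * Complex.Gamma s * Complex.cos (π * s / 2) *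
        riemannZeta s := by
    have : {s : ℂ | 1 < s.re} ∈ 𝓝 (2 : ℂ) :=
      (isOpen_lt continuous_const Complex.continuous_re).mem_nhds (by simp)
    filter_upwards [this] with s hs
    refine riemannZeta_one_sub (fun n hn => ?_) fun h1 => ?_
    · rw [hn] at hs
      simp at hs
      linarith [(Nat.cast_nonneg n : (0 : ℝ) ≤ n)]
    · simp [h1] at hs
  have h := hl.unique (hr.congr_of_eventuallyEq he)
  have hG2 : Complex.Gamma 2 = 1 := by
    simp
  have hc2 : Complex.cos (π * 2 / 2) = -1 := by simp
  have hp2 : (2 * π : ℂ) ^ (-2 : ℂ) = 1 / (4 * π ^ 2) := by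
    rw [Complex.cpow_neg, show (2 : ℂ) = ((2 : ℕ) : ℂ) by norm_num, Complex.cpow_natCast]
    push_cast
    ring
  simp only [hG2, hc2, hp2, riemannZeta_two, Pi.mul_apply] at h
  have hpi : (π : ℂ) ≠ 0 := by exact_mod_cast pi_ne_zero
  field_simp at h
  linear_combination (1 / 12) * h

theorem re_deriv_riemannZeta_two :
    (deriv riemannZeta 2).re = 2 * π ^ 2 * (deriv riemannZeta (-1)).re -
      π ^ 2 / 6 * (1 - eulerMascheroniConstant - log (2 * π)) := by
  have h : deriv riemannZeta 2 = ((2 * π ^ 2 : ℝ) : ℂ) * deriv riemannZeta (-1) -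
      ((π ^ 2 / 6 * (1 - eulerMascheroniConstant - log (2 * π)) : ℝ) : ℂ) := by
    rw [deriv_riemannZeta_two]
    push_cast [Complex.ofReal_log (by positivity : 0 ≤ 2 * π)]
    ring
  rw [h, Complex.sub_re, Complex.re_ofReal_mul, Complex.ofReal_re]

theorem integral_sub_half_mul_log_Gamma_sq :
    ∫ x in (0 : ℝ)..1, (x - 1 / 2) * log (Gamma x) ^ 2 =
      ∫ x in (0 : ℝ)..1, subHalfMulLogPiDivSin x * log (Gamma x) := by
  have hc : ContinuousOn (fun x : ℝ => x - 1 / 2) (Icc 0 1) := by fun_prop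
  have h1 : IntervalIntegrable (fun x => (x - 1 / 2) * log (Gamma x) ^ 2) volume 0 1 := by
    simpa only [sq, mul_assoc] using
      (sqIntegrable_log_Gamma.mul_continuousOn hc).intervalIntegrable_mul sqIntegrable_log_Gamma
  have h2 := sqIntegrable_subHalfMulLogPiDivSin.intervalIntegrable_mul sqIntegrable_log_Gamma
  have h3 : IntervalIntegrable
      (fun x => (1 - x - 1 / 2) * log (Gamma (1 - x)) ^ 2) volume 0 1 := by
    simpa using (h1.comp_sub_left 1).symm
  have h4 : IntervalIntegrable
      (fun x => subHalfMulLogPiDivSin (1 - x) * log (Gamma (1 - x))) volume 0 1 := by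
    simpa using (h2.comp_sub_left 1).symm
  have h5 := integral_comp_one_sub (fun x => (x - 1 / 2) * log (Gamma x) ^ 2)
  have h6 := integral_comp_one_sub (fun x => subHalfMulLogPiDivSin x * log (Gamma x))
  have h7 : ∫ x in (0 : ℝ)..1, ((x - 1 / 2) * log (Gamma x) ^ 2 +
      (1 - x - 1 / 2) * log (Gamma (1 - x)) ^ 2) =
      ∫ x in (0 : ℝ)..1, (subHalfMulLogPiDivSin x * log (Gamma x) +
        subHalfMulLogPiDivSin (1 - x) * log (Gamma (1 - x))) := by
    refine intervalIntegral.integral_congr_Ioo_of_le zero_le_one fun x hx => ?_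
    simp only [subHalfMulLogPiDivSin, logPiDivSin_one_sub]
    rw [← log_Gamma_add_log_Gamma_one_sub_s15 hx]
    ring
  rw [intervalIntegral.integral_add h1 h3, intervalIntegral.integral_add h2 h4, h5, h6] at h7
  linarith

theorem integral_mul_log_Gamma_sq :
    ∫ x in (0 : ℝ)..1, x * log (Gamma x) ^ 2 =
      (∫ x in (0 : ℝ)..1, subHalfMulLogPiDivSin x * log (Gamma x)) +
        (∫ x in (0 : ℝ)..1, log (Gamma x) ^ 2) / 2 := by
  have hc : ContinuousOn (fun x : ℝ => x - 1 / 2) (Icc 0 1) := by fun_prop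
  have h1 : IntervalIntegrable (fun x => (x - 1 / 2) * log (Gamma x) ^ 2) volume 0 1 := by
    simpa only [sq, mul_assoc] using
      (sqIntegrable_log_Gamma.mul_continuousOn hc).intervalIntegrable_mul sqIntegrable_log_Gamma
  have h2 : IntervalIntegrable (fun x => log (Gamma x) ^ 2) volume 0 1 := by
    simpa only [sq] using sqIntegrable_log_Gamma.intervalIntegrable_mul sqIntegrable_log_Gamma
  rw [← integral_sub_half_mul_log_Gamma_sq, ← intervalIntegral.integral_div,
    ← intervalIntegral.integral_add h1 (h2.div_const 2)]
  refine intervalIntegral.integral_congr fun x _ => ?_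
  ring

theorem hasSum_subHalfMulLogPiDivSin_mul_log_Gamma :
    HasSum (fun n : ℕ => (log (2 * π) + harmonic n) *
        (eulerMascheroniConstant + log (2 * π) + log ((n + 1 : ℕ) : ℝ)) / ((n + 1 : ℕ) : ℝ) ^ 2)
      (-(2 * π ^ 2 * ∫ x in (0 : ℝ)..1, subHalfMulLogPiDivSin x * log (Gamma x))) := by
  have h1 := hasSum_cosCoeff_mul_add_sinCoeff_mul sqIntegrable_subHalfMulLogPiDivSin
    sqIntegrable_log_Gamma
  rw [integral_eq_zero_of_antisymm subHalfMulLogPiDivSin_one_sub, zero_mul, sub_zero] at h1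
  convert! h1.mul_left (-(2 * π ^ 2)) using 1
  · funext n
    rw [sinCoeff_subHalfMulLogPiDivSin, sinCoeff_log_Gamma n.succ_ne_zero,
      cosCoeff_eq_zero_of_antisymm subHalfMulLogPiDivSin_one_sub]
    have : ((n + 1 : ℕ) : ℝ) ≠ 0 := by positivity
    rw [Nat.succ_eq_add_one]
    field_simp
    ring
  · ring

theorem hasSum_log_Gamma_sq :
    HasSum (fun n : ℕ => (π ^ 2 / 4 +
        (eulerMascheroniConstant + log (2 * π) + log ((n + 1 : ℕ) : ℝ)) ^ 2) /
          ((n + 1 : ℕ) : ℝ) ^ 2)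
      (2 * π ^ 2 * ((∫ x in (0 : ℝ)..1, log (Gamma x) ^ 2) - (log (2 * π) / 2) ^ 2)) := by
  have h1 := hasSum_sq_cosCoeff_add_sq_sinCoeff sqIntegrable_log_Gamma
  rw [integral_log_Gamma] at h1
  convert! h1.mul_left (2 * π ^ 2) using 1
  funext n
  rw [cosCoeff_log_Gamma, sinCoeff_log_Gamma n.succ_ne_zero]
  have : ((n + 1 : ℕ) : ℝ) ≠ 0 := by positivity
  rw [Nat.succ_eq_add_one]
  field_simp
  ring

theorem hasSum_one_div_succ_sq :
    HasSum (fun n : ℕ => 1 / ((n + 1 : ℕ) : ℝ) ^ 2) (π ^ 2 / 6) := by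
  simpa using (hasSum_nat_add_iff' 1).mpr hasSum_zeta_two

theorem two_pi_sq_mul_integral_log_Gamma_sq :
    2 * π ^ 2 * ((∫ x in (0 : ℝ)..1, log (Gamma x) ^ 2) - (log (2 * π) / 2) ^ 2) =
      (π ^ 2 / 4 + (eulerMascheroniConstant + log (2 * π)) ^ 2) * (π ^ 2 / 6) -
        2 * (eulerMascheroniConstant + log (2 * π)) * (deriv riemannZeta 2).re +
        (iteratedDeriv 2 riemannZeta 2).re := by
  have h1 := hasSum_log_pow_div_pow 1 le_rfl
  have h2 := hasSum_log_pow_div_pow 2 le_rfl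
  refine hasSum_log_Gamma_sq.unique ?_
  convert! ((hasSum_one_div_succ_sq.mul_left
    (π ^ 2 / 4 + (eulerMascheroniConstant + log (2 * π)) ^ 2)).add
    (h1.mul_left (2 * (eulerMascheroniConstant + log (2 * π))))).add h2 using 1
  · funext n
    ring
  · simp only [iteratedDeriv_one, Nat.cast_ofNat]
    ring

theorem hasSum_harmonic_succ_mul_log_div_sq :
    HasSum (fun n : ℕ => harmonic (n + 1) * log ((n + 1 : ℕ) : ℝ) / ((n + 1 : ℕ) : ℝ) ^ 2)
      (-(2 * π ^ 2 * ∫ x in (0 : ℝ)..1, subHalfMulLogPiDivSin x * log (Gamma x)) -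
        (eulerMascheroniConstant + log (2 * π)) *
          (log (2 * π) * (π ^ 2 / 6) + (riemannZeta 3).re) +
        log (2 * π) * (deriv riemannZeta 2).re - (deriv riemannZeta 3).re) := by
  have h0 := (hasSum_log_pow_div_pow 0 (k := 3) (by norm_num)).tsum_eq
  have h1 := hasSum_log_pow_div_pow 1 le_rfl
  have h2 := hasSum_log_pow_div_pow 1 (k := 3) (by norm_num)
  simp only [iteratedDeriv_zero, pow_zero, one_mul, Nat.cast_ofNat] at h0
  have h3 := hasSum_log_two_pi_add_harmonic_div_sq
  rw [h0] at h3
  convert! ((hasSum_subHalfMulLogPiDivSin_mul_log_Gamma.sub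
    (h3.mul_left (eulerMascheroniConstant + log (2 * π)))).sub
    (h1.mul_left (log (2 * π)))).add h2 using 1
  · funext n
    have : ((n + 1 : ℕ) : ℝ) ≠ 0 := by positivity
    rw [harmonic_succ]
    push_cast at this ⊢
    field_simp
    ring
  · simp only [iteratedDeriv_one, Nat.cast_ofNat]
    ring

theorem log_exp_sq_div_rpow (a : ℝ) :
    log (exp a ^ 2 / (2 * π) ^ ((1 : ℝ) / 6)) = 2 * a - log (2 * π) / 6 := by
  have h : 0 < 2 * π := by positivity
  rw [log_div (by positivity) (by positivity), log_pow, log_exp, log_rpow h]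
  push_cast
  ring

end

/-- The series `∑_{n=2}^∞ (H_n·log n)/n²` converges and equals
`(π²/6)·(π²/8 − γ²/2 + log²(2π)) + π²·γ·log(A²/(2π)^{1/6}) − C·ζ(3) − ζ′(3)
  + (1/2)·ζ″(2) − 2π²·∫₀¹ x·log²Γ(x) dx`,
where `H_n` is the n-th harmonic number, `A = exp(1/12 − ζ′(−1))` is the
Glaisher–Kinkelin constant, `C = log(2π) + γ`, and `ζ″(2)` is the second
derivative of the Riemann zeta function at `2`. -/
theorem hasSum_harmonic_mul_log_div_sq :
    HasSum (fun n : ℕ => (harmonic (n + 2) : ℝ) * Real.log (n + 2) / ((n : ℝ) + 2) ^ 2)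
      ((π ^ 2 / 6) * (π ^ 2 / 8 - Real.eulerMascheroniConstant ^ 2 / 2
          + Real.log (2 * π) ^ 2)
        + π ^ 2 * Real.eulerMascheroniConstant *
            Real.log ((Real.exp (1 / 12 - (deriv riemannZeta (-1)).re)) ^ 2
              / (2 * π) ^ ((1 : ℝ) / 6))
        - (Real.log (2 * π) + Real.eulerMascheroniConstant) * (riemannZeta 3).re
        - (deriv riemannZeta 3).re
        + (1 / 2) * (iteratedDeriv 2 riemannZeta 2).re
        - 2 * π ^ 2 * ∫ x in (0:ℝ)..1, x * Real.log (Real.Gamma x) ^ 2) := by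
  convert! (hasSum_nat_add_iff' 1).mpr hasSum_harmonic_succ_mul_log_div_sq using 1
  · funext n
    push_cast
    rw [show (n : ℝ) + 1 + 1 = n + 2 by ring]
  · have h := two_pi_sq_mul_integral_log_Gamma_sq
    have h' := re_deriv_riemannZeta_two
    rw [h'] at h
    rw [log_exp_sq_div_rpow, integral_mul_log_Gamma_sq, h']
    simp only [Finset.range_one, Finset.sum_singleton, zero_add, Nat.cast_one, log_one, mul_zero,
      zero_div, sub_zero]
    linear_combination (-1 / 2) * h
end
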